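/- arXiv:1402.6261 — 2 statements merged into one kernel-verified Lean document; each statement's English description precedes it below -/
import Mathlib

section
/- Let X be a real k×n matrix of rank k and let 1 ≤ i ≤ n−1 satisfy i < f_X(i) < f_X(i+1) < i+n+1. Let I_{i+1} be the ≤_{i+1}-lexicographically minimal k-subset of [n] with Δ_{I_{i+1}}(X) ≠ 0; then i+1 ∈ I_{i+1} and i ∉ I_{i+1}. (a) If Δ_{(I_{i+1}∖{i+1})∪{i}}(X) ≠ 0, set a = Δ_{I_{i+1}}(X)/Δ_{(I_{i+1}∖{i+1})∪{i}}(X) and let X′ be obtained from X by subtracting a times column i from column i+1 (i.e., X′ = X·x_i(−a)); then f_{X′}(i) = f_X(i+1), f_{X′}(i+1) = f_X(i), and f_{X′}(r) = f_X(r) for all r ∈ [n]∖{i,i+1}. (b) If moreover X is totally nonnegative, then Δ_{(I_{i+1}∖{i+1})∪{i}}(X) ≠ 0 holds automatically, and X′ is again totally nonnegative. -/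
open Finset

noncomputable section
open scoped Classical

/-- The cyclic (clockwise) half-open interval `(a, b]` in `Fin m`. -/
def cIoc {m : ℕ} (a b : Fin m) : Finset (Fin m) :=
  univ.filter fun k => if a < b then a < k ∧ k ≤ b else a < k ∨ k ≤ b

/-- The open cyclic (clockwise) arc from `a` to `b` in `Fin m`, excluding both endpoints. -/
def cIoo {m : ℕ} (a b : Fin m) : Finset (Fin m) :=
  univ.filter fun k => if a < b then a < k ∧ k < b else (a < k ∨ k < b) ∧ k ≠ a ∧ k ≠ b

/-- Set partitions of `[n] = Fin n`. -/
abbrev NCP (n : ℕ) := Finpartition (univ : Finset (Fin n))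

/-- `a` and `b` lie in the same block of `σ`. -/
def sameBlock {n : ℕ} (σ : NCP n) (a b : Fin n) : Prop :=
  ∃ B ∈ σ.parts, a ∈ B ∧ b ∈ B

/-- `σ` is a noncrossing partition: there are no `a < b < c < d` with `a, c` in one
block and `b, d` in a different block. -/
def IsNoncrossing {n : ℕ} (σ : NCP n) : Prop :=
  ∀ a b c d : Fin n, a < b → b < c → c < d →
    sameBlock σ a c → sameBlock σ b d → sameBlock σ a b

/-- The relation defining the dual (Kreweras complement) partition: `ĩ ~ j̃` iff no block
of `σ` meets both cyclic intervals `{(i+1), …, j}` and `{(j+1), …, i}`. -/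
def dualRel {n : ℕ} (σ : NCP n) (i j : Fin n) : Prop :=
  i = j ∨ ¬ ∃ B ∈ σ.parts, (B ∩ cIoc i j).Nonempty ∧ (B ∩ cIoc j i).Nonempty

/-- The point `ī` of `[2n]` (0-based: `ī = 2i`). -/
def bar {n : ℕ} (i : Fin n) : Fin (2*n) := ⟨2*(i:ℕ), by have := i.isLt; omega⟩

/-- The point `ĩ` of `[2n]` (0-based: `ĩ = 2i+1`). -/
def til {n : ℕ} (i : Fin n) : Fin (2*n) := ⟨2*(i:ℕ)+1, by have := i.isLt; omega⟩

/-- A matching (fixed-point-free involution) of `Fin m`. -/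
def IsMatching {m : ℕ} (τ : Fin m → Fin m) : Prop :=
  Function.Involutive τ ∧ ∀ i, τ i ≠ i

/-- A noncrossing matching: there are no `a < b < c < d` with `τ a = c` and `τ b = d`. -/
def IsNCMatching {m : ℕ} (τ : Fin m → Fin m) : Prop :=
  ¬ ∃ a b c d : Fin m, a < b ∧ b < c ∧ c < d ∧ τ a = c ∧ τ b = d

/-- `j` is the cyclic predecessor of `i` in the block of `σ` containing `i`
(`j = i` when `i` is a singleton). -/
def cyclicPred {n : ℕ} (σ : NCP n) (j i : Fin n) : Prop :=
  ∃ B ∈ σ.parts, i ∈ B ∧ j ∈ B ∧ ∀ x ∈ B, x ∉ cIoo j i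

/-- `m` is the medial pairing of `σ`: it pairs `ī` (0-based `2i`) with `j̃` (0-based `2j+1`),
where `j` is the cyclic predecessor of `i` in its block. -/
def IsMedialOf {n : ℕ} (σ : NCP n) (m : Fin (2*n) → Fin (2*n)) : Prop :=
  ∀ i j : Fin n, m (bar i) = til j ↔ cyclicPred σ j i

/-- The crossing number of a matching: the number of pairs `{a,b}` with
`a < b < τ a < τ b`. -/
def crossNum {m : ℕ} (τ : Fin m → Fin m) : ℕ :=
  ((univ : Finset (Fin m × Fin m)).filter fun p =>
    p.1 < p.2 ∧ p.2 < τ p.1 ∧ τ p.1 < τ p.2).card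

/-- `a`, `b`, `c`, `d` are distinct and in cyclic order on `Fin m`. -/
def CyclicOrder4 {m : ℕ} (a b c d : Fin m) : Prop :=
  (a < b ∧ b < c ∧ c < d) ∨ (b < c ∧ c < d ∧ d < a) ∨
  (c < d ∧ d < a ∧ a < b) ∨ (d < a ∧ a < b ∧ b < c)

/-- `τ` covers `τ'` in the uncrossing order. -/
def UncrossCover {m : ℕ} (τ' τ : Fin m → Fin m) : Prop :=
  IsMatching τ' ∧ IsMatching τ ∧
  ∃ a b c d : Fin m, CyclicOrder4 a b c d ∧ τ a = c ∧ τ b = d ∧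
    (∀ x, x ≠ a → x ≠ b → x ≠ c → x ≠ d → τ' x = τ x) ∧
    ((τ' a = d ∧ τ' b = c ∧ ∀ x ∈ cIoo a b, τ x ∉ cIoo c d) ∨
     (τ' a = b ∧ τ' c = d ∧ ∀ x ∈ cIoo b c, τ x ∉ cIoo d a))

/-- The uncrossing partial order on matchings: reflexive-transitive closure of covers. -/
def uncrossLE {m : ℕ} (τ' τ : Fin m → Fin m) : Prop :=
  Relation.ReflTransGen UncrossCover τ' τ

/-- An affine permutation of period `m`. -/
def IsAffinePerm (m : ℕ) (f : ℤ → ℤ) : Prop :=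
  Function.Bijective f ∧ ∀ i : ℤ, f (i + m) = f i + m

/-- The length of an affine permutation of period `m`:
`#{(i,j) : 1 ≤ i ≤ m, i < j, f i > f j}`. -/
def affLen (m : ℕ) (f : ℤ → ℤ) : ℕ :=
  Set.ncard {p : ℤ × ℤ | 1 ≤ p.1 ∧ p.1 ≤ (m:ℤ) ∧ p.1 < p.2 ∧ f p.2 < f p.1}

/-- The affine rank matrix `r_f(i,j) = #{a ≤ i : f a ≥ j}`. -/
def rankMat (f : ℤ → ℤ) (i j : ℤ) : ℕ :=
  Set.ncard {a : ℤ | a ≤ i ∧ j ≤ f a}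

/-- Affine Bruhat order via rank matrices. -/
def bruhatLE (f g : ℤ → ℤ) : Prop := ∀ i j : ℤ, rankMat f i j ≤ rankMat g i j

/-- The sum `Σ_{i=1}^m (f i − i)`. -/
def windowSum (m : ℕ) (f : ℤ → ℤ) : ℤ :=
  ∑ i ∈ Finset.range m, (f ((i:ℤ)+1) - ((i:ℤ)+1))

/-- The affine permutation `g_τ` associated to a matching `τ` of `[2n]`:
on `[2n]`, `g_τ i = τ i` if `τ i > i` and `g_τ i = τ i + 2n` if `τ i < i`,
extended periodically. -/
def gTau (n : ℕ) (τ : Fin (2*n) → Fin (2*n)) (i : ℤ) : ℤ :=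
  if h : (i % ((2*n : ℕ) : ℤ)).toNat < 2*n then
    let r : Fin (2*n) := ⟨(i % ((2*n : ℕ) : ℤ)).toNat, h⟩
    (i - i % ((2*n : ℕ) : ℤ)) +
      (if r < τ r then ((τ r : ℕ) : ℤ) else ((τ r : ℕ) : ℤ) + 2*n)
  else i

/-- `f_τ = g_τ − 1`. -/
def fTau (n : ℕ) (τ : Fin (2*n) → Fin (2*n)) (i : ℤ) : ℤ := gTau n τ i - 1

/-- An electrical affine permutation for `n`. -/
def IsElectrical (n : ℕ) (f : ℤ → ℤ) : Prop :=
  IsAffinePerm (2*n) f ∧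
  (∀ i : ℤ, i ≤ f i ∧ f i ≤ i + 2*n - 2) ∧
  windowSum (2*n) f = ((n:ℤ) - 1) * (2*n) ∧
  ∀ i : ℤ, (f (f i + 1) - (i - 1)) % ((2*n : ℕ) : ℤ) = 0

/-- The Grassmann necklace subset `I_a(f) ⊆ [m]`: representatives in `[m]` (0-based) of
`{f b mod m : b < a and f b ≥ a}`. -/
def necklaceI (m : ℕ) (f : ℤ → ℤ) (a : ℤ) : Finset (Fin m) :=
  univ.filter fun x => ∃ b : ℤ, b < a ∧ a ≤ f b ∧ f b % (m:ℤ) = ((x:ℕ):ℤ)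

/-- The dual necklace subset `J_a(f) ⊆ [m]`: representatives in `[m]` (0-based) of
`{b mod m : b < a and f b ≥ a}`. -/
def necklaceJ (m : ℕ) (f : ℤ → ℤ) (a : ℤ) : Finset (Fin m) :=
  univ.filter fun x => ∃ b : ℤ, b < a ∧ a ≤ f b ∧ b % (m:ℤ) = ((x:ℕ):ℤ)

/-- Dominance order on `k`-element subsets of `Fin m`:
the `r`-th smallest element of `I` is at most the `r`-th smallest element of `J`. -/
def domLE {m : ℕ} (k : ℕ) (I J : Finset (Fin m)) : Prop :=
  ∃ (hI : I.card = k) (hJ : J.card = k),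
    ∀ r : Fin k, I.orderEmbOfFin hI r ≤ J.orderEmbOfFin hJ r

/-- `a`-shifted dominance order: rotate so that `a` becomes least, then compare. -/
def sdomLE {m : ℕ} (k : ℕ) (a : Fin m) (I J : Finset (Fin m)) : Prop :=
  domLE k (I.image (· - a)) (J.image (· - a))

/-- `a`-shifted lexicographic order on subsets of `Fin m`. -/
def lexLE {m : ℕ} (a : Fin m) (I J : Finset (Fin m)) : Prop :=
  I = J ∨ List.Lex (· < ·) ((I.image (· - a)).sort (· ≤ ·)) ((J.image (· - a)).sort (· ≤ ·))

/-- A Catalan subset of `[2n]` (0-based): an `(n−1)`-subset such that the length-`2n`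
word with `U` at positions `{0} ∪ {x+1 : x ∈ I}` and `D` elsewhere is a Dyck path. -/
def IsCatalan {n : ℕ} (I : Finset (Fin (2*n))) : Prop :=
  I.card = n - 1 ∧
  ∀ p : ℕ, p ≤ 2*n →
    p ≤ 2 * ((insert 0 (I.image fun x => (x:ℕ)+1)).filter (· < p)).card

/-- Catalan subset with respect to the shifted order `≤_a`. -/
def IsCatalanAt {n : ℕ} (a : Fin (2*n)) (I : Finset (Fin (2*n))) : Prop :=
  IsCatalan (I.image (· - a))

/-- The set of maxima of `S` with respect to the `a`-shifted order. -/
def maxAt {m : ℕ} (a : Fin m) (S : Finset (Fin m)) : Finset (Fin m) :=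
  S.filter fun x => ∀ y ∈ S, y - a ≤ x - a

/-- `I_a(σ)` for a noncrossing partition `σ`: the complement in `[2n]` of the set of
`≤_a`-maxima of the blocks of `σ` (embedded by `bar`) and of the blocks of the dual
partition `σ̃` (embedded by `til`). -/
def IaP {n : ℕ} (σ : NCP n) (a : Fin (2*n)) : Finset (Fin (2*n)) :=
  univ \ ((σ.parts.biUnion fun B => maxAt a (B.image bar)) ∪
          ((univ : Finset (Fin n)).biUnion fun i =>
            maxAt a ((univ.filter (dualRel σ i)).image til)))

/-- `I` is concordant with `σ`: `I` has `n−1` elements and every block of `σ` and of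
its dual `σ̃` contains exactly one element of `[2n] ∖ I`. -/
def Concordant {n : ℕ} (σ : NCP n) (I : Finset (Fin (2*n))) : Prop :=
  I.card = n - 1 ∧
  (∀ B ∈ σ.parts, ((B.image bar) ∩ (univ \ I)).card = 1) ∧
  (∀ i : Fin n, (((univ.filter (dualRel σ i)).image til) ∩ (univ \ I)).card = 1)

/-- `E(I)`: the set of noncrossing partitions concordant with `I`. -/
def ESet {n : ℕ} (I : Finset (Fin (2*n))) : Set (NCP n) :=
  {σ | IsNoncrossing σ ∧ Concordant σ I}

/-- The maximal minor `Δ_I(X)` on the columns indexed by `I`, in increasing order. -/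
def minorOn {k m : ℕ} (X : Matrix (Fin k) (Fin m) ℝ) (I : Finset (Fin m)) : ℝ :=
  if h : I.card = k then (X.submatrix id fun r => I.orderEmbOfFin h r).det else 0

/-- `X` is totally nonnegative: it has full rank `k` and all maximal minors are `≥ 0`. -/
def IsTNN {k m : ℕ} (X : Matrix (Fin k) (Fin m) ℝ) : Prop :=
  X.rank = k ∧ ∀ I : Finset (Fin m), I.card = k → 0 ≤ minorOn X I

/-- `t` times the matrix unit `E_{p,q}` (0-based indices). -/
def matE (m : ℕ) (p q : ℕ) (t : ℝ) : Matrix (Fin m) (Fin m) ℝ :=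
  Matrix.of fun r s => if (r:ℕ) = p ∧ (s:ℕ) = q then t else 0

/-- `x_i(t) = Id + t·E_{i,i+1}` (1-based index `i`). -/
def xB (m i : ℕ) (t : ℝ) : Matrix (Fin m) (Fin m) ℝ := 1 + matE m (i-1) i t

/-- `y_i(t) = Id + t·E_{i+1,i}` (1-based index `i`). -/
def yB (m i : ℕ) (t : ℝ) : Matrix (Fin m) (Fin m) ℝ := 1 + matE m i (i-1) t

/-- `u_i(t) = x_i(t)·y_{i−1}(t)` (1-based index `i`). -/
def uB (m i : ℕ) (t : ℝ) : Matrix (Fin m) (Fin m) ℝ := xB m i t * yB m (i-1) t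

/-- The columns of `X`, extended `n`-periodically to all integer indices (0-based). -/
def colP {k n : ℕ} (X : Matrix (Fin k) (Fin n) ℝ) (i : ℤ) : Fin k → ℝ :=
  fun r => if h : (i % (n:ℤ)).toNat < n then X r ⟨(i % (n:ℤ)).toNat, h⟩ else 0

/-- `f_X(i) = min { j ≥ i : v_i ∈ span(v_{i+1}, …, v_j) }` (0-based columns). -/
def fX {k n : ℕ} (X : Matrix (Fin k) (Fin n) ℝ) (i : ℤ) : ℤ :=
  sInf {j : ℤ | i ≤ j ∧ colP X i ∈ Submodule.span ℝ (colP X '' Set.Ioc i j)}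

/-- Fintype instance for finite partitions of a finite set. -/
instance {α : Type*} [DecidableEq α] [Fintype α] (s : Finset α) : Fintype (Finpartition s) :=
  Fintype.ofInjective Finpartition.parts fun _ _ h => Finpartition.ext h

/-- The sorted list of (the values of) a subset of `Fin m`. -/
def sortedL {m : ℕ} (I : Finset (Fin m)) : List ℕ :=
  (I.sort (· ≤ ·)).map Fin.val

/-- The number of inversions of a list (= the number of adjacent transpositions
needed to sort it, when entries are distinct). -/
def invNum (l : List ℕ) : ℕ :=
  ((Finset.range l.length ×ˢ Finset.range l.length).filter fun pq =>
    pq.1 < pq.2 ∧ l.getD pq.2 0 < l.getD pq.1 0).card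

/-- The subset of `Fin m` whose values lie in the list `l`. -/
def toFinF {m : ℕ} (l : List ℕ) : Finset (Fin m) :=
  univ.filter fun x => (x:ℕ) ∈ l

/-- The double sum `Σ_{σ ∈ E(l), κ ∈ E(l')} L σ · L κ`, where `E` of a list with a
repeated entry (or an out-of-range entry) is empty. -/
def pairSum {n : ℕ} (L : NCP n → ℝ) (l l' : List ℕ) : ℝ :=
  if (l.Nodup ∧ ∀ x ∈ l, x < 2*n) ∧ (l'.Nodup ∧ ∀ x ∈ l', x < 2*n) then
    ∑ᶠ σ ∈ ESet (n := n) (toFinF l), ∑ᶠ κ ∈ ESet (n := n) (toFinF l'), L σ * L κ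
  else 0

/-- The list obtained from `LI` by replacing its entries at the positions in `S`
(in increasing order of position) by the first `#S` entries of `LJ`. -/
def swapI (LI LJ : List ℕ) (S : Finset ℕ) : List ℕ :=
  (List.range LI.length).map fun p =>
    if p ∈ S then LJ.getD ((S.filter (· < p)).card) 0 else LI.getD p 0

/-- The list obtained from `LJ` by replacing its first `#S` entries by the entries of
`LI` at the positions in `S`, in increasing order. -/
def swapJ (LI LJ : List ℕ) (S : Finset ℕ) : List ℕ :=
  (List.range LJ.length).map fun p =>
    if p < S.card then LI.getD ((S.sort (· ≤ ·)).getD p 0) 0 else LJ.getD p 0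

/-- Sorting the columns of `insert a T` brings the column `a` to the front up to the sign
`(-1) ^ #{x ∈ T | x < a}`. -/
lemma map_orderEmbOfFin_insert {E : Type*} [AddCommGroup E] [Module ℝ E] {n m : ℕ}
    (F : E [⋀^Fin (m + 1)]→ₗ[ℝ] ℝ) (V : Fin n → E) (T : Finset (Fin n)) (hT : T.card = m)
    (a : Fin n) (h : (insert a T).card = m + 1) :
    F (fun r => V ((insert a T).orderEmbOfFin h r)) =
      (-1) ^ (T.filter (· < a)).card *
        F (Matrix.vecCons (V a) fun r => V (T.orderEmbOfFin hT r)) := by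
  set e := (insert a T).orderEmbOfFin h with he
  obtain ⟨p, hp⟩ : ∃ p, e p = a := by
    have : a ∈ Set.range e := by
      rw [he, Finset.range_orderEmbOfFin]; simp
    exact this
  have hcomp : (fun r => e (p.succAbove r)) = T.orderEmbOfFin hT := by
    refine Finset.orderEmbOfFin_unique hT (fun r => ?_)
      (e.strictMono.comp (Fin.strictMono_succAbove p))
    have h1 : e (p.succAbove r) ∈ insert a T := Finset.orderEmbOfFin_mem _ _ _
    refine (Finset.mem_insert.1 h1).resolve_left fun h2 => ?_
    exact Fin.succAbove_ne p r (e.injective (h2.trans hp.symm))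
  have hfun : (fun r => V (e r)) = p.insertNth (V a) fun r => V (T.orderEmbOfFin hT r) := by
    rw [← Fin.insertNth_self_removeNth p fun r => V (e r), hp]
    congr 1
    ext1 r
    rw [← hcomp]
    rfl
  have hcard : (T.filter (· < a)).card = (p : ℕ) := by
    have : T.filter (· < a) = (Finset.Iio p).map e.toEmbedding := by
      ext x
      simp only [Finset.mem_filter, Finset.mem_map, Finset.mem_Iio, RelEmbedding.coe_toEmbedding]
      constructor
      · rintro ⟨hx, hxa⟩
        have : x ∈ Set.range e := by
          rw [he, Finset.range_orderEmbOfFin]; simp [hx]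
        obtain ⟨r, rfl⟩ := this
        exact ⟨r, e.lt_iff_lt.1 (hp ▸ hxa), rfl⟩
      · rintro ⟨r, hr, rfl⟩
        have h2 : e r < a := hp ▸ e.lt_iff_lt.2 hr
        exact ⟨(Finset.mem_insert.1 (Finset.orderEmbOfFin_mem _ h r)).resolve_left h2.ne, h2⟩
    rw [this, Finset.card_map, Fin.card_Iio]
  rw [hfun, AlternatingMap.map_insertNth, hcard]
  simp

lemma minorOn_eq {k n : ℕ} (X : Matrix (Fin k) (Fin n) ℝ) (I : Finset (Fin n))
    (h : I.card = k) :
    minorOn X I = Matrix.detRowAlternating (fun r => X.col (I.orderEmbOfFin h r)) := by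
  rw [minorOn, dif_pos h, ← Matrix.det_transpose]
  rfl

lemma minorOn_insert {m n : ℕ} (X : Matrix (Fin (m + 1)) (Fin n) ℝ) (T : Finset (Fin n))
    (hT : T.card = m) (a : Fin n) (ha : a ∉ T) :
    minorOn X (insert a T) = (-1) ^ (T.filter (· < a)).card *
      Matrix.detRowAlternating (Matrix.vecCons (X.col a) fun r => X.col (T.orderEmbOfFin hT r)) := by
  have h : (insert a T).card = m + 1 := by rw [Finset.card_insert_of_notMem ha, hT]
  rw [minorOn_eq X _ h, map_orderEmbOfFin_insert _ _ T hT a h]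

lemma minorOn_insert_insert {m n : ℕ} (X : Matrix (Fin (m + 2)) (Fin n) ℝ) (R : Finset (Fin n))
    (hR : R.card = m) (a b : Fin n) (ha : a ∉ R) (hb : b ∉ R) (hab : a < b) :
    minorOn X (insert a (insert b R)) =
      (-1) ^ (R.filter (· < a)).card * (-1) ^ (R.filter (· < b)).card *
      Matrix.detRowAlternating (Matrix.vecCons (X.col a) (Matrix.vecCons (X.col b)
        fun r => X.col (R.orderEmbOfFin hR r))) := by
  have h : (insert b R).card = m + 1 := by rw [Finset.card_insert_of_notMem hb, hR]
  rw [minorOn_insert X (insert b R) h a (by simp [ha, hab.ne])]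
  have := map_orderEmbOfFin_insert
    (Matrix.detRowAlternating (R := ℝ) (n := Fin (m + 2)) |>.curryLeft (X.col a)) X.col R hR b h
  rw [AlternatingMap.curryLeft_apply_apply, AlternatingMap.curryLeft_apply_apply] at this
  rw [this, Finset.filter_insert, if_neg hab.not_gt, mul_assoc]

/-- The three-term relation for `ω(a, b) = det(a, b, r₁, …, r_m)`. -/
lemma det_vecCons_vecCons_mul {m : ℕ} (W : Fin m → Fin (m + 2) → ℝ)
    (a b c d : Fin (m + 2) → ℝ) :
    let ω (u v : Fin (m + 2) → ℝ) : ℝ :=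
      Matrix.detRowAlternating (Matrix.vecCons u (Matrix.vecCons v W))
    ω a b * ω c d = ω c b * ω a d + ω a c * ω b d := by
  intro ω
  set A : Matrix (Fin (m + 2)) (Fin (m + 2)) ℝ := Matrix.of (Matrix.vecCons a (Matrix.vecCons b W))
    with hA
  have h0 := Matrix.mulVec_cramer A.transpose c
  have hsum : ∑ j, A.transpose.cramer c j • A j = A.det • c := by
    rw [← Matrix.det_transpose, ← h0]
    ext r
    simp [Matrix.mulVec, dotProduct, mul_comm]
  have hcr (j) : A.transpose.cramer c j = (A.updateRow j c).det :=
    Matrix.cramer_transpose_apply A c j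
  let L : (Fin (m + 2) → ℝ) →ₗ[ℝ] ℝ :=
    { toFun := fun u => ω u d
      map_add' := fun u v => AlternatingMap.map_vecCons_add _ _ _ _
      map_smul' := fun t u => AlternatingMap.map_vecCons_smul _ _ _ _ }
  have := congrArg L hsum
  rw [map_sum, Fin.sum_univ_succ, Fin.sum_univ_succ] at this
  simp only [map_smul, smul_eq_mul, hcr] at this
  have hz (j : Fin m) : L (A j.succ.succ) = 0 := by
    change Matrix.detRowAlternating _ = 0
    exact AlternatingMap.map_eq_zero_of_eq _ _ (i := 0) (j := j.succ.succ) (by simp [hA]; rfl)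
      (by simp [Fin.ext_iff])
  have e0 : (A.updateRow 0 c).det = ω c b := by
    congr 1
    ext r s
    refine Fin.cases ?_ (fun r => ?_) r <;> simp [hA, Matrix.updateRow_apply]
  have e1 : (A.updateRow (Fin.succ 0) c).det = ω a c := by
    congr 1
    ext r s
    refine Fin.cases ?_ (fun r => Fin.cases ?_ (fun r => ?_) r) r <;>
      simp [hA, Matrix.updateRow_apply, Fin.ext_iff]
  simp only [hz, mul_zero, Finset.sum_const_zero, add_zero, e0, e1] at this
  exact this.symm

lemma minorOn_three_term {m n : ℕ} (X : Matrix (Fin (m + 2)) (Fin n) ℝ) (R : Finset (Fin n))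
    (hR : R.card = m) (a b c d : Fin n) (ha : a ∉ R) (hb : b ∉ R) (hc : c ∉ R) (hd : d ∉ R)
    (hab : a < b) (hbc : b < c) (hcd : c < d) :
    minorOn X (insert a (insert c R)) * minorOn X (insert b (insert d R)) =
      minorOn X (insert a (insert b R)) * minorOn X (insert c (insert d R)) +
      minorOn X (insert a (insert d R)) * minorOn X (insert b (insert c R)) := by
  rw [minorOn_insert_insert X R hR a c ha hc (hab.trans hbc),
    minorOn_insert_insert X R hR b d hb hd (hbc.trans hcd),
    minorOn_insert_insert X R hR a b ha hb hab, minorOn_insert_insert X R hR c d hc hd hcd,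
    minorOn_insert_insert X R hR a d ha hd (hab.trans (hbc.trans hcd)),
    minorOn_insert_insert X R hR b c hb hc hbc]
  have h := det_vecCons_vecCons_mul (fun r => X.col (R.orderEmbOfFin hR r))
    (X.col a) (X.col b) (X.col c) (X.col d)
  have hs : Matrix.detRowAlternating (Matrix.vecCons (X.col c) (Matrix.vecCons (X.col b)
        fun r => X.col (R.orderEmbOfFin hR r))) =
      - Matrix.detRowAlternating (Matrix.vecCons (X.col b) (Matrix.vecCons (X.col c)
        fun r => X.col (R.orderEmbOfFin hR r))) := by
    rw [← AlternatingMap.map_swap _ _ (i := 0) (j := 1) (by simp)]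
    congr 1
    ext r s
    refine Fin.cases ?_ (fun r => Fin.cases ?_ (fun r => ?_) r) r
    · simp
    · simp
    · simp [Equiv.swap_apply_of_ne_of_ne, Fin.ext_iff]
  simp only [hs] at h
  linear_combination (-((-1 : ℝ) ^ (R.filter (· < a)).card * (-1) ^ (R.filter (· < b)).card *
    (-1) ^ (R.filter (· < c)).card * (-1) ^ (R.filter (· < d)).card)) * h

lemma minorOn_ne_zero_iff {k n : ℕ} (X : Matrix (Fin k) (Fin n) ℝ) (I : Finset (Fin n))
    (h : I.card = k) : minorOn X I ≠ 0 ↔ LinearIndepOn ℝ X.col (I : Set (Fin n)) := by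
  rw [minorOn_eq X I h]
  have h1 := Matrix.linearIndependent_rows_iff_isUnit
    (A := Matrix.of fun r => X.col (I.orderEmbOfFin h r))
  rw [Matrix.isUnit_iff_isUnit_det, isUnit_iff_ne_zero] at h1
  change Matrix.det (Matrix.of fun r => X.col (I.orderEmbOfFin h r)) ≠ 0 ↔ _
  rw [← h1, LinearIndepOn, ← linearIndependent_equiv (I.orderIsoOfFin h).toEquiv]
  rfl

lemma span_eq_top_of_minorOn_ne_zero {k n : ℕ} {X : Matrix (Fin k) (Fin n) ℝ}
    {I : Finset (Fin n)} (h : I.card = k) (hI : minorOn X I ≠ 0) :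
    Submodule.span ℝ (X.col '' I) = ⊤ := by
  have h1 := (minorOn_ne_zero_iff X I h).1 hI
  have h2 := LinearIndependent.span_eq_top_of_card_eq_finrank' h1 (by simp [h])
  rwa [← Set.image_eq_range] at h2

lemma rank_eq_of_minorOn_ne_zero {k n : ℕ} {X : Matrix (Fin k) (Fin n) ℝ}
    {I : Finset (Fin n)} (h : I.card = k) (hI : minorOn X I ≠ 0) : X.rank = k := by
  rw [Matrix.rank_eq_finrank_span_cols]
  have : Submodule.span ℝ (Set.range X.col) = ⊤ :=
    top_le_iff.1 (span_eq_top_of_minorOn_ne_zero h hI ▸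
      Submodule.span_mono (Set.image_subset_range _ _))
  rw [this]
  simp

/-- The position of `x` in the cyclic order on `Fin n` starting at `b`. -/
def cycPos {n : ℕ} (b x : Fin n) : ℕ := ((x - b : Fin n) : ℕ)

lemma cycPos_eq {n : ℕ} (b x : Fin n) :
    cycPos b x = if b ≤ x then (x : ℕ) - b else (x : ℕ) + n - b := by
  unfold cycPos
  split_ifs with h
  · exact Fin.sub_val_of_le h
  · rw [Fin.coe_sub_iff_lt.2 (not_le.1 h), add_comm n]

lemma cycPos_lt {n : ℕ} (b x : Fin n) : cycPos b x < n := (x - b).isLt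

lemma exists_cycPos_eq {n : ℕ} (b : Fin n) {j : ℕ} (hj : j < n) : ∃ x, cycPos b x = j := by
  have : NeZero n := ⟨by omega⟩
  exact ⟨⟨j, hj⟩ + b, by simp [cycPos]⟩

lemma cycPos_injective {n : ℕ} (b : Fin n) : Function.Injective (cycPos b) := by
  intro x y h
  rw [cycPos_eq, cycPos_eq] at h
  ext
  split_ifs at h <;> simp only [Fin.le_def] at * <;> omega

lemma cycPos_self {n : ℕ} (b : Fin n) : cycPos b b = 0 := by simp [cycPos_eq]

lemma cycPos_pos {n : ℕ} {b x : Fin n} (h : x ≠ b) : 0 < cycPos b x :=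
  Nat.pos_of_ne_zero fun h0 => h (cycPos_injective b (h0.trans (cycPos_self b).symm))

lemma cycPos_pred {n : ℕ} {a b : Fin n} (h : (b : ℕ) = a + 1) : cycPos b a + 1 = n := by
  have := b.isLt
  rw [cycPos_eq, if_neg (by rw [Fin.le_def]; omega)]
  omega

lemma minorOn_three_term_cyclic {k n : ℕ} (X : Matrix (Fin k) (Fin n) ℝ) (R : Finset (Fin n))
    (hR : R.card + 2 = k) {a b x y : Fin n} (hab : (b : ℕ) = a + 1) (ha : a ∉ R) (hb : b ∉ R)
    (hx : x ∉ R) (hy : y ∉ R) (hxb : x ≠ b) (hya : y ≠ a) (hxy : cycPos b x < cycPos b y) :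
    minorOn X (insert b (insert y R)) * minorOn X (insert a (insert x R)) =
      minorOn X (insert b (insert x R)) * minorOn X (insert a (insert y R)) +
      minorOn X (insert b (insert a R)) * minorOn X (insert x (insert y R)) := by
  subst hR
  have hpos := cycPos_pos hxb
  have hlast : cycPos b y < cycPos b a := by
    have h1 := cycPos_pred hab
    have h2 := cycPos_lt b y
    have h3 : cycPos b y ≠ cycPos b a := fun h => hya (cycPos_injective b h)
    omega
  have hba : a < b := by rw [Fin.lt_def]; omega
  have hcases : (b < x ∧ x < y) ∨ (x < y ∧ y < a) ∨ (y < a ∧ b < x) := by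
    have := x.isLt
    have := y.isLt
    have := b.isLt
    simp only [cycPos_eq, Fin.le_def] at hpos hlast hxy
    simp only [Fin.lt_def]
    split_ifs at hpos hlast hxy <;> omega
  rcases hcases with ⟨h1, h2⟩ | ⟨h1, h2⟩ | ⟨h1, h2⟩
  · have := minorOn_three_term X R rfl a b x y ha hb hx hy hba h1 h2
    rw [Finset.insert_comm b a]
    linear_combination this
  · have := minorOn_three_term X R rfl x y a b hx hy ha hb h1 h2 hba
    rw [Finset.insert_comm b a, Finset.insert_comm b y, Finset.insert_comm b x,
      Finset.insert_comm a x, Finset.insert_comm a y]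
    linear_combination this
  · have := minorOn_three_term X R rfl y a b x hy ha hb hx h1 hba h2
    rw [Finset.insert_comm b a, Finset.insert_comm b y, Finset.insert_comm x y,
      Finset.insert_comm a y]
    linear_combination this

lemma minorOn_congr_of_col_eq {k n : ℕ} {X X' : Matrix (Fin k) (Fin n) ℝ} {J : Finset (Fin n)}
    (h : ∀ j ∈ J, X'.col j = X.col j) : minorOn X' J = minorOn X J := by
  by_cases hJ : J.card = k
  · rw [minorOn_eq _ _ hJ, minorOn_eq _ _ hJ]
    congr 1
    ext1 r
    exact h _ (Finset.orderEmbOfFin_mem _ _ _)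
  · rw [minorOn, minorOn, dif_neg hJ, dif_neg hJ]

/-- The effect on maximal minors of subtracting `t` times a column from the next one. -/
lemma minorOn_insert_of_col_sub {k n : ℕ} {X X' : Matrix (Fin k) (Fin n) ℝ} {a b : Fin n} {t : ℝ}
    (hab : (b : ℕ) = a + 1) (hb : X'.col b = X.col b - t • X.col a)
    (hX : ∀ j, j ≠ b → X'.col j = X.col j) {T : Finset (Fin n)} (hT : T.card + 1 = k)
    (hbT : b ∉ T) :
    minorOn X' (insert b T) =
      minorOn X (insert b T) - t * if a ∈ T then 0 else minorOn X (insert a T) := by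
  subst hT
  rw [minorOn_insert X' T rfl b hbT, minorOn_insert X T rfl b hbT, hb]
  have hW : (fun r => X'.col (T.orderEmbOfFin rfl r)) = fun r => X.col (T.orderEmbOfFin rfl r) := by
    ext1 r
    exact hX _ fun h => hbT (h ▸ Finset.orderEmbOfFin_mem T rfl r)
  rw [hW, sub_eq_add_neg, ← neg_smul, AlternatingMap.map_vecCons_add,
    AlternatingMap.map_vecCons_smul, smul_eq_mul]
  split_ifs with ha
  · obtain ⟨r, hr⟩ : a ∈ Set.range (T.orderEmbOfFin rfl) := by
      rw [Finset.range_orderEmbOfFin]; exact ha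
    have : Matrix.detRowAlternating (Matrix.vecCons (X.col a)
        fun r => X.col (T.orderEmbOfFin rfl r)) = 0 :=
      AlternatingMap.map_eq_zero_of_eq _ _ (i := 0) (j := r.succ) (by simp [hr])
        (Fin.succ_ne_zero r).symm
    rw [this]
    ring
  · have hfilter : T.filter (· < b) = T.filter (· < a) := by
      refine Finset.filter_congr fun x hx => ?_
      have : x ≠ a := fun h => ha (h ▸ hx)
      rw [Fin.lt_def, Fin.lt_def]
      rw [Ne, Fin.ext_iff] at this
      omega
    rw [minorOn_insert X T rfl a ha, hfilter]
    ring

lemma col_mul_xB {k n : ℕ} (X : Matrix (Fin k) (Fin n) ℝ) {i : ℕ} {a b : Fin n}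
    (ha : (a : ℕ) = i) (hb : (b : ℕ) = i + 1) (t : ℝ) (j : Fin n) :
    (X * xB n (i + 1) (-t)).col j = if j = b then X.col b - t • X.col a else X.col j := by
  ext r
  have h1 : (X * matE n i (i + 1) (-t)) r j = if j = b then -t * X r a else 0 := by
    rw [Matrix.mul_apply, Finset.sum_eq_single a]
    · by_cases h : j = b
      · simp [matE, ha, h, hb, mul_comm]
      · have : (j : ℕ) ≠ i + 1 := fun h' => h (Fin.ext (h'.trans hb.symm))
        simp [matE, h, this]
    · intro s _ hs
      have : (s : ℕ) ≠ i := fun h' => hs (Fin.ext (h'.trans ha.symm))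
      simp [matE, this]
    · simp
  simp only [xB, Nat.add_sub_cancel, Matrix.mul_add, Matrix.mul_one, Matrix.col_apply,
    Matrix.add_apply, h1]
  split_ifs with h
  · subst h; simp [sub_eq_add_neg]
  · simp

lemma mem_of_smul_add_mem {E : Type*} [AddCommGroup E] [Module ℝ E] {P : Submodule ℝ E} {c : ℝ}
    (hc : c ≠ 0) {v w : E} (h : c • v + w ∈ P) (hw : w ∈ P) : v ∈ P :=
  (Submodule.smul_mem_iff _ hc).1 ((Submodule.add_mem_iff_left _ hw).1 h)

/-- If no element of `A` is spanned by vectors at smaller positions, an expansion along `A` of a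
vector spanned by the vectors at positions `< d` only involves positions `< d`. -/
lemma mem_span_image_inter_lt {ι E : Type*} [Finite ι] [AddCommGroup E] [Module ℝ E] {V : ι → E}
    {ψ : ι → ℕ} (hψ : Function.Injective ψ) {A : Set ι}
    (hA : ∀ s ∈ A, V s ∉ Submodule.span ℝ (V '' {x | ψ x < ψ s})) {z : E} {d : ℕ}
    (hz : z ∈ Submodule.span ℝ (V '' {x | ψ x < d})) (hzA : z ∈ Submodule.span ℝ (V '' A)) :
    z ∈ Submodule.span ℝ (V '' (A ∩ {x | ψ x < d})) := by
  have key : ∀ D, z ∈ Submodule.span ℝ (V '' (A ∩ {x | ψ x < D})) →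
      z ∈ Submodule.span ℝ (V '' (A ∩ {x | ψ x < d})) := by
    intro D
    induction D with
    | zero =>
      exact fun h => Submodule.span_mono (Set.image_mono fun x hx => absurd hx.2 (by simp)) h
    | succ D ih =>
      intro h
      rcases Nat.lt_or_ge D d with hD | hD
      · exact Submodule.span_mono (Set.image_mono
          (Set.inter_subset_inter_right _ fun x (hx : ψ x < D + 1) =>
            show ψ x < d by omega)) h
      · apply ih
        by_cases hs : ∃ s ∈ A, ψ s = D
        · obtain ⟨s, hsA, hsD⟩ := hs
          have hsub : A ∩ {x | ψ x < D + 1} ⊆ insert s (A ∩ {x | ψ x < D}) := by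
            rintro x ⟨hxA, hx⟩
            rcases Nat.lt_succ_iff_lt_or_eq.1 hx with h1 | h1
            · exact Or.inr ⟨hxA, h1⟩
            · exact Or.inl (hψ (h1.trans hsD.symm))
          have h' := Submodule.span_mono (Set.image_mono hsub) h
          rw [Set.image_insert_eq, Submodule.mem_span_insert] at h'
          obtain ⟨c, w, hw, rfl⟩ := h'
          rcases eq_or_ne c 0 with rfl | hc
          · simpa using hw
          · refine absurd ?_ (hA s hsA)
            refine mem_of_smul_add_mem hc (Submodule.span_mono (Set.image_mono fun x hx => ?_) hz)
              (Submodule.span_mono (Set.image_mono fun x hx => ?_) hw)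
            · exact lt_of_lt_of_le hx (hsD ▸ hD)
            · exact lt_of_lt_of_eq hx.2 hsD.symm
        · refine Submodule.span_mono (Set.image_mono ?_) h
          rintro x ⟨hxA, hx⟩
          exact ⟨hxA, (Nat.lt_succ_iff_lt_or_eq.1 hx).resolve_right fun h1 => hs ⟨x, hxA, h1⟩⟩
  obtain ⟨N, hN⟩ := (Set.finite_range ψ).bddAbove
  refine key (N + 1) ?_
  rwa [Set.inter_eq_left.2 (show A ⊆ {x | ψ x < N + 1} from
    fun x _ => Nat.lt_succ_of_le (hN ⟨x, rfl⟩))]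

/-- Members of an independent family missing from all expansions of `z` can be dropped together. -/
lemma mem_span_image_diff {ι E : Type*} [AddCommGroup E] [Module ℝ E] {V : ι → E} {B : Set ι}
    (hB : LinearIndepOn ℝ V B) {z : E} (hz : z ∈ Submodule.span ℝ (V '' B)) (Q : Finset ι)
    (hQB : ∀ t ∈ Q, t ∈ B) (hQ : ∀ t ∈ Q, z ∈ Submodule.span ℝ (V '' (B \ {t}))) :
    z ∈ Submodule.span ℝ (V '' (B \ Q)) := by
  induction Q using Finset.induction_on with
  | empty => simpa using hz
  | insert t Q ht ih =>
    have h1 := ih (fun s hs => hQB s (Finset.mem_insert_of_mem hs))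
      fun s hs => hQ s (Finset.mem_insert_of_mem hs)
    have hsub : B \ Q ⊆ insert t (B \ (insert t Q : Finset ι)) := by
      rintro x ⟨hx, hxQ⟩
      by_cases hxt : x = t
      · exact Or.inl hxt
      · exact Or.inr ⟨hx, by simpa [hxt] using hxQ⟩
    have h2 := Submodule.span_mono (Set.image_mono hsub) h1
    rw [Set.image_insert_eq, Submodule.mem_span_insert] at h2
    obtain ⟨c, w, hw, rfl⟩ := h2
    rcases eq_or_ne c 0 with rfl | hc
    · simpa using hw
    · have htB := hQB t (Finset.mem_insert_self _ _)
      refine absurd ?_ (hB.notMem_span htB)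
      refine mem_of_smul_add_mem hc (hQ t (Finset.mem_insert_self _ _))
        (Submodule.span_mono (Set.image_mono ?_) hw)
      exact Set.sdiff_subset_sdiff_right (by simp)

lemma minorOn_insert_ne_zero_iff {k n : ℕ} {X : Matrix (Fin k) (Fin n) ℝ} {T : Finset (Fin n)}
    (hT : T.card + 1 = k) {x : Fin n} (hx : x ∉ T) :
    minorOn X (insert x T) ≠ 0 ↔
      LinearIndepOn ℝ X.col (T : Set (Fin n)) ∧
        X.col x ∉ Submodule.span ℝ (X.col '' (T : Set (Fin n))) := by
  rw [minorOn_ne_zero_iff _ _ (by rw [Finset.card_insert_of_notMem hx, hT]), Finset.coe_insert,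
    linearIndepOn_insert (by simpa using hx)]

/-- `I` is the greedy basis of the columns of `X` for the cyclic order starting at `b`, where `a`
is the cyclic predecessor of `b`; moreover `p < q` are the least positions such that the column
`a`, resp. `b`, is spanned by the columns at positions in `[0, p)`, resp. `(0, q)`. -/
structure IsGreedyPair {k n : ℕ} (X : Matrix (Fin k) (Fin n) ℝ) (a b : Fin n)
    (I : Finset (Fin n)) (p q : ℕ) : Prop where
  succ : (b : ℕ) = a + 1
  card : I.card = k
  minor_ne_zero : minorOn X I ≠ 0
  greedy : ∀ s ∈ I, X.col s ∉ Submodule.span ℝ (X.col '' {x | cycPos b x < cycPos b s})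
  pos : 0 < p
  lt : p < q
  le : q ≤ n
  mem_left : X.col a ∈ Submodule.span ℝ (X.col '' {x | cycPos b x < p})
  min_left : ∀ e < p, X.col a ∉ Submodule.span ℝ (X.col '' {x | cycPos b x < e})
  mem_right : X.col b ∈ Submodule.span ℝ (X.col '' {x | 0 < cycPos b x ∧ cycPos b x < q})
  min_right : ∀ e < q,
    X.col b ∉ Submodule.span ℝ (X.col '' {x | 0 < cycPos b x ∧ cycPos b x < e})

namespace IsGreedyPair

variable {k n : ℕ} {X : Matrix (Fin k) (Fin n) ℝ} {a b : Fin n} {I : Finset (Fin n)} {p q : ℕ}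

lemma ne (h : IsGreedyPair X a b I p q) : a ≠ b := fun hab => by
  have := h.succ
  rw [hab] at this
  omega

lemma right_mem (h : IsGreedyPair X a b I p q) : b ∈ I := by
  by_contra hb
  have hq := h.min_right 1 (by have := h.pos; have := h.lt; omega)
  have h1 : X.col b ∈ Submodule.span ℝ (X.col '' I) := by
    rw [span_eq_top_of_minorOn_ne_zero h.card h.minor_ne_zero]; trivial
  have h2 : X.col b ∈ Submodule.span ℝ (X.col '' {x | cycPos b x < 1}) :=
    Submodule.subset_span ⟨b, by simp [cycPos_self], rfl⟩
  refine hq (Submodule.span_mono (Set.image_mono ?_)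
    (mem_span_image_inter_lt (cycPos_injective b) (fun s hs => h.greedy s hs) h2 h1))
  rintro x ⟨hxI, hx⟩
  exact ⟨cycPos_pos fun hxb => hb (hxb ▸ hxI), hx⟩

lemma left_notMem (h : IsGreedyPair X a b I p q) : a ∉ I := fun ha => by
  have h1 := cycPos_pred h.succ
  have h2 := h.lt
  have h3 := h.le
  refine h.greedy a ha (Submodule.span_mono (Set.image_mono fun x hx => ?_) h.mem_left)
  rw [Set.mem_ofPred_eq] at hx ⊢
  omega

lemma card_erase (h : IsGreedyPair X a b I p q) : (I.erase b).card + 1 = k := by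
  rw [Finset.card_erase_add_one h.right_mem, h.card]

lemma linearIndepOn_erase (h : IsGreedyPair X a b I p q) :
    LinearIndepOn ℝ X.col (I.erase b : Set (Fin n)) :=
  ((minorOn_ne_zero_iff X I h.card).1 h.minor_ne_zero).mono (by simp)

lemma greedy_erase (h : IsGreedyPair X a b I p q) :
    ∀ s ∈ (I.erase b : Set (Fin n)),
      X.col s ∉ Submodule.span ℝ (X.col '' {x | cycPos b x < cycPos b s}) :=
  fun s hs => h.greedy s (Finset.mem_of_mem_erase hs)

lemma minor_left_ne_zero_iff (h : IsGreedyPair X a b I p q) :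
    minorOn X (insert a (I.erase b)) ≠ 0 ↔
      X.col a ∉ Submodule.span ℝ (X.col '' (I.erase b : Set (Fin n))) := by
  rw [minorOn_insert_ne_zero_iff h.card_erase fun ha => h.left_notMem (Finset.mem_of_mem_erase ha)]
  exact and_iff_right h.linearIndepOn_erase

lemma le_cycPos_of_notMem_span (h : IsGreedyPair X a b I p q) {c : Fin n} (hcb : c ≠ b)
    (hc : X.col c ∉ Submodule.span ℝ (X.col '' (I.erase b : Set (Fin n)))) :
    q ≤ cycPos b c + 1 := by
  by_contra! hlt
  have h1 : X.col c ∈ Submodule.span ℝ (X.col '' I) := by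
    rw [span_eq_top_of_minorOn_ne_zero h.card h.minor_ne_zero]; trivial
  have h2 : X.col c ∈ Submodule.span ℝ (X.col '' {x | cycPos b x < cycPos b c + 1}) :=
    Submodule.subset_span ⟨c, Nat.lt_succ_self _, rfl⟩
  have h3 := mem_span_image_inter_lt (cycPos_injective b) (fun s hs => h.greedy s hs) h2 h1
  have hsub : (I : Set (Fin n)) ∩ {x | cycPos b x < cycPos b c + 1} ⊆
      insert b ((I.erase b : Set (Fin n)) ∩ {x | cycPos b x < cycPos b c + 1}) := by
    rintro x ⟨hxI, hx⟩
    by_cases hxb : x = b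
    · exact Or.inl hxb
    · exact Or.inr ⟨Finset.mem_erase.2 ⟨hxb, hxI⟩, hx⟩
  have h4 := Submodule.span_mono (Set.image_mono hsub) h3
  rw [Set.image_insert_eq, Submodule.mem_span_insert] at h4
  obtain ⟨α, z, hz, hcz⟩ := h4
  rcases eq_or_ne α 0 with rfl | hα
  · rw [zero_smul, zero_add] at hcz
    exact hc (hcz ▸ Submodule.span_mono (Set.image_mono Set.inter_subset_left) hz)
  · refine h.min_right _ hlt (mem_of_smul_add_mem hα (w := z) (hcz ▸ ?_) ?_)
    · exact Submodule.subset_span ⟨c, ⟨cycPos_pos hcb, Nat.lt_succ_self _⟩, rfl⟩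
    · refine Submodule.span_mono (Set.image_mono ?_) hz
      rintro x ⟨hxI, hx⟩
      exact ⟨cycPos_pos (Finset.ne_of_mem_erase hxI), hx⟩

lemma minor_left_ne_zero (h : IsGreedyPair X a b I p q)
    (hX : ∀ J : Finset (Fin n), J.card = k → 0 ≤ minorOn X J) :
    minorOn X (insert a (I.erase b)) ≠ 0 := by
  rw [h.minor_left_ne_zero_iff]
  intro haS
  have hpn : p - 1 < n := by have := h.lt; have := h.le; omega
  obtain ⟨y, hy⟩ : ∃ y, cycPos b y = p - 1 := exists_cycPos_eq b hpn
  have hp := h.pos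
  have hay : X.col a ∉ Submodule.span ℝ (X.col '' (I.erase y : Set (Fin n))) := fun hmem => by
    have h1 := mem_span_image_inter_lt (cycPos_injective b)
      (fun s hs => h.greedy s (Finset.mem_of_mem_erase hs)) h.mem_left hmem
    refine h.min_left (p - 1) (by omega) (Submodule.span_mono (Set.image_mono ?_) h1)
    rintro x ⟨hxI, hx⟩
    rw [Set.mem_ofPred_eq] at hx ⊢
    have : cycPos b x ≠ p - 1 := fun hxp =>
      Finset.ne_of_mem_erase hxI (cycPos_injective b (hxp.trans hy.symm))
    omega
  have hyS : y ∈ I.erase b := by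
    by_contra hyS
    refine hay (Submodule.span_mono (Set.image_mono fun x hx => ?_) haS)
    exact Finset.mem_erase.2 ⟨fun hxy => hyS (hxy ▸ hx), Finset.mem_of_mem_erase hx⟩
  have hyb : y ≠ b := Finset.ne_of_mem_erase hyS
  obtain ⟨c, hcb, hc⟩ : ∃ c, c ≠ b ∧
      X.col c ∉ Submodule.span ℝ (X.col '' (I.erase b : Set (Fin n))) := by
    by_contra! hall
    refine (((minorOn_ne_zero_iff X I h.card).1 h.minor_ne_zero).notMem_span h.right_mem)
      (Submodule.span_le.2 ?_ h.mem_right)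
    rintro _ ⟨x, hx, rfl⟩
    have := hall x fun hxb => by simp [hxb, cycPos_self] at hx
    rwa [Finset.coe_erase] at this
  have hca : c ≠ a := fun hca => hc (hca ▸ haS)
  have hcS : c ∉ I.erase b := fun hcS => hc (Submodule.subset_span ⟨c, hcS, rfl⟩)
  have hyc : cycPos b y < cycPos b c := by
    have := h.le_cycPos_of_notMem_span hcb hc
    have := h.lt
    omega
  have haI := h.left_notMem
  set R := (I.erase b).erase y with hR
  have hRI : ∀ x ∈ R, x ∈ I := fun x hx => Finset.mem_of_mem_erase (Finset.mem_of_mem_erase hx)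
  have hRS : insert y R = I.erase b := Finset.insert_erase hyS
  have hRy : insert b R = I.erase y := by
    rw [hR, Finset.erase_right_comm]
    exact Finset.insert_erase (Finset.mem_erase.2 ⟨hyb.symm, h.right_mem⟩)
  have hyI := Finset.mem_of_mem_erase hyS
  have hrel := minorOn_three_term_cyclic X R (a := a) (b := b) (x := y) (y := c)
    (by rw [← h.card_erase, ← Finset.card_erase_add_one hyS]) h.succ
    (fun h' => haI (hRI a h')) (by simp [hR]) (by simp [hR])
    (fun h' => hcS (Finset.mem_of_mem_erase h')) hyb hca hyc
  rw [Finset.insert_comm b a, Finset.insert_comm y c, hRS, hRy, Finset.insert_erase h.right_mem]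
    at hrel
  have hzero : minorOn X (insert a (I.erase b)) = 0 := by
    by_contra h0
    exact h.minor_left_ne_zero_iff.1 h0 haS
  have hcardy : (I.erase y).card + 1 = k := by rw [Finset.card_erase_add_one hyI, h.card]
  have h1 : minorOn X (insert a (I.erase y)) ≠ 0 :=
    (minorOn_insert_ne_zero_iff hcardy fun h' => haI (Finset.mem_of_mem_erase h')).2
      ⟨((minorOn_ne_zero_iff X I h.card).1 h.minor_ne_zero).mono (by simp), hay⟩
  have h2 : minorOn X (insert c (I.erase b)) ≠ 0 :=
    (minorOn_insert_ne_zero_iff h.card_erase hcS).2 ⟨h.linearIndepOn_erase, hc⟩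
  have h3 : 0 ≤ minorOn X I * minorOn X (insert a (insert c R)) := by
    refine mul_nonneg (hX _ h.card) (hX _ ?_)
    rw [Finset.card_insert_of_notMem, Finset.card_insert_of_notMem, ← h.card_erase,
      ← Finset.card_erase_add_one hyS]
    · exact fun h' => hcS (Finset.mem_of_mem_erase h')
    · simp only [Finset.mem_insert, not_or]
      exact ⟨hca.symm, fun h' => haI (hRI a h')⟩
  have h4 : 0 < minorOn X (insert a (I.erase y)) * minorOn X (insert c (I.erase b)) := by
    refine mul_pos (lt_of_le_of_ne (hX _ ?_) h1.symm) (lt_of_le_of_ne (hX _ ?_) h2.symm)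
    · rw [Finset.card_insert_of_notMem fun h' => haI (Finset.mem_of_mem_erase h'), hcardy]
    · rw [Finset.card_insert_of_notMem hcS, h.card_erase]
  rw [hzero] at hrel
  linarith

/-- A basis `insert a T` with `T ≠ I.erase b` can be moved towards the greedy basis while keeping
the column `a`. -/
lemma exists_exchange (h : IsGreedyPair X a b I p q)
    (hne : minorOn X (insert a (I.erase b)) ≠ 0) {T : Finset (Fin n)} (hT : T.card + 1 = k)
    (haT : a ∉ T) (hbT : b ∉ T) (hTne : minorOn X (insert a T) ≠ 0) (hTI : T ≠ I.erase b) :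
    ∃ s ∈ I.erase b, s ∉ T ∧ ∃ t ∈ T, cycPos b s < cycPos b t ∧
      minorOn X (insert a (insert s (T.erase t))) ≠ 0 := by
  by_contra! hcon
  have haI := h.left_notMem
  have hTB := (minorOn_ne_zero_iff X _
    (by rw [Finset.card_insert_of_notMem haT, hT])).1 hTne
  have hfail : ∀ s ∈ I.erase b, s ∉ T → X.col s ∈
      Submodule.span ℝ (X.col '' insert a ((T : Set (Fin n)) ∩ {x | cycPos b x < cycPos b s})) := by
    intro s hs hsT
    have hsa : s ≠ a := fun h' => haI (h' ▸ Finset.mem_of_mem_erase hs)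
    have h1 := mem_span_image_diff hTB (z := X.col s)
      (by rw [span_eq_top_of_minorOn_ne_zero (by rw [Finset.card_insert_of_notMem haT, hT]) hTne]
          trivial)
      (T.filter fun t => cycPos b s < cycPos b t)
      (fun t ht => by simp [(Finset.mem_filter.1 ht).1]) (fun t ht => by
        obtain ⟨htT, hst⟩ := Finset.mem_filter.1 ht
        by_contra hspan
        have hta : t ≠ a := fun h' => haT (h' ▸ htT)
        refine absurd (hcon s hs hsT t htT hst) ?_
        have hset : insert a (T.erase t) = (insert a T).erase t :=
          (Finset.erase_insert_of_ne hta.symm).symm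
        rw [Finset.insert_comm, hset]
        refine (minorOn_insert_ne_zero_iff ?_ ?_).2
          ⟨hTB.mono (by rw [Finset.coe_erase]; exact Set.sdiff_subset), by simpa using hspan⟩
        · rw [← hT, Finset.card_erase_add_one (by simp [htT]), Finset.card_insert_of_notMem haT]
        · simp [hsa, hsT])
    refine Submodule.span_mono (Set.image_mono ?_) h1
    rintro x ⟨hx, hxs⟩
    rcases Finset.mem_insert.1 hx with rfl | hxT
    · exact Or.inl rfl
    · refine Or.inr ⟨hxT, ?_⟩
      have h2 : ¬ cycPos b s < cycPos b x := fun h' => hxs (by simp [hxT, h'])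
      have h3 : cycPos b x ≠ cycPos b s := fun h' => hsT (cycPos_injective b h' ▸ hxT)
      rw [Set.mem_ofPred_eq]
      omega
  have hleft : ∀ s ∈ I.erase b, s ∉ T → X.col a ∈
      Submodule.span ℝ (X.col '' insert s ((T : Set (Fin n)) ∩ {x | cycPos b x < cycPos b s})) := by
    intro s hs hsT
    have h1 := hfail s hs hsT
    rw [Set.image_insert_eq, Submodule.mem_span_insert] at h1
    obtain ⟨α, z, hz, hsz⟩ := h1
    rcases eq_or_ne α 0 with rfl | hα
    · rw [zero_smul, zero_add] at hsz
      exact absurd (hsz ▸ Submodule.span_mono (Set.image_mono Set.inter_subset_right) hz)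
        (h.greedy_erase s hs)
    · refine mem_of_smul_add_mem hα (w := z) (hsz ▸ ?_) ?_
      · exact Submodule.subset_span ⟨s, Or.inl rfl, rfl⟩
      · exact Submodule.span_mono (Set.image_mono (Set.subset_insert _ _)) hz
  have hpos : ∀ s ∈ I.erase b, s ∉ T → cycPos b s + 1 = p := by
    intro s hs hsT
    refine le_antisymm ?_ ?_
    · by_contra! hlt
      refine h.greedy_erase s hs (Submodule.span_le.2 ?_ (hfail s hs hsT))
      rintro _ ⟨x, rfl | hx, rfl⟩
      · refine Submodule.span_mono (Set.image_mono fun y hy => ?_) h.mem_left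
        rw [Set.mem_ofPred_eq] at hy ⊢
        omega
      · exact Submodule.subset_span ⟨x, hx.2, rfl⟩
    · by_contra! hlt
      refine h.min_left _ hlt (Submodule.span_mono (Set.image_mono ?_) (hleft s hs hsT))
      rintro x (rfl | hx)
      · exact Nat.lt_succ_self (cycPos b x)
      · exact Nat.lt_succ_of_lt hx.2
  obtain ⟨s, hs, hsT⟩ : ∃ s ∈ I.erase b, s ∉ T := by
    by_contra! hsub
    exact hTI (Finset.eq_of_subset_of_card_le hsub
      (by have := h.card_erase; omega)).symm
  have huniq : ∀ x ∈ I.erase b, x ≠ s → x ∈ T := by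
    intro x hx hxs
    by_contra hxT
    have h1 := hpos x hx hxT
    have h2 := hpos s hs hsT
    exact hxs (cycPos_injective b (by omega))
  have hsp := hpos s hs hsT
  obtain ⟨t, htT, hts, htI⟩ : ∃ t ∈ T, cycPos b t < cycPos b s ∧ t ∉ I.erase b := by
    by_contra! hall
    refine h.minor_left_ne_zero_iff.1 hne
      (Submodule.span_mono (Set.image_mono ?_) (hleft s hs hsT))
    rintro x (rfl | hx)
    · exact hs
    · exact hall x hx.1 hx.2
  have htspan : X.col t ∈ Submodule.span ℝ (X.col '' (I.erase b : Set (Fin n))) := by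
    by_contra hspan
    have h1 := h.le_cycPos_of_notMem_span (fun h' => hbT (h' ▸ htT)) hspan
    have h2 := h.lt
    omega
  have h2 : X.col t ∈ Submodule.span ℝ (X.col '' {x | cycPos b x < cycPos b t + 1}) :=
    Submodule.subset_span ⟨t, Nat.lt_succ_self _, rfl⟩
  have h3 := mem_span_image_inter_lt (cycPos_injective b) h.greedy_erase h2 htspan
  refine hTB.notMem_span (i := t) (by simp [htT]) (Submodule.span_mono (Set.image_mono ?_) h3)
  rintro x ⟨hxI, hx⟩
  rw [Set.mem_ofPred_eq] at hx
  have hxs : x ≠ s := fun h' => by rw [h'] at hx; omega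
  refine ⟨by simp [huniq x hxI hxs], fun hxt => htI ?_⟩
  rw [Set.mem_singleton_iff] at hxt
  exact hxt ▸ hxI

lemma minor_mul_minor_le (h : IsGreedyPair X a b I p q)
    (hX : ∀ J : Finset (Fin n), J.card = k → 0 ≤ minorOn X J)
    {T : Finset (Fin n)} (hT : T.card + 1 = k) (haT : a ∉ T) (hbT : b ∉ T) :
    minorOn X I * minorOn X (insert a T) ≤
      minorOn X (insert b T) * minorOn X (insert a (I.erase b)) := by
  have hne := h.minor_left_ne_zero hX
  induction hN : ∑ x ∈ T, cycPos b x using Nat.strong_induction_on generalizing T with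
  | _ N ih =>
  have hins {x : Fin n} {U : Finset (Fin n)} (hU : U.card + 1 = k) (hx : x ∉ U) :
      0 ≤ minorOn X (insert x U) := hX _ (by rw [Finset.card_insert_of_notMem hx, hU])
  have haS : a ∉ I.erase b := fun h' => h.left_notMem (Finset.mem_of_mem_erase h')
  by_cases hTne : minorOn X (insert a T) = 0
  · rw [hTne, mul_zero]
    exact mul_nonneg (hins hT hbT) (hins h.card_erase haS)
  by_cases hTI : T = I.erase b
  · rw [hTI, Finset.insert_erase h.right_mem]
  obtain ⟨s, hs, hsT, t, htT, hst, hU⟩ := h.exists_exchange hne hT haT hbT hTne hTI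
  have hsb : s ≠ b := Finset.ne_of_mem_erase hs
  have hsa : s ≠ a := fun h' => haS (h' ▸ hs)
  have hta : t ≠ a := fun h' => haT (h' ▸ htT)
  set R := T.erase t with hR
  have hRT : ∀ x ∈ R, x ∈ T := fun x hx => Finset.mem_of_mem_erase hx
  have hsR : s ∉ R := fun h' => hsT (hRT s h')
  have hUcard : (insert s R).card + 1 = k := by
    rw [Finset.card_insert_of_notMem hsR, Finset.card_erase_add_one htT, hT]
  have haU : a ∉ insert s R := by
    simp only [Finset.mem_insert, not_or]
    exact ⟨hsa.symm, fun h' => haT (hRT a h')⟩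
  have hbU : b ∉ insert s R := by
    simp only [Finset.mem_insert, not_or]
    exact ⟨hsb.symm, fun h' => hbT (hRT b h')⟩
  have htU : t ∉ insert s R := by
    simp only [Finset.mem_insert, not_or]
    exact ⟨fun h' => hsT (h' ▸ htT), by simp [hR]⟩
  have hlt : ∑ x ∈ insert s R, cycPos b x < N := by
    rw [Finset.sum_insert hsR, ← hN, ← Finset.add_sum_erase T _ htT]
    exact Nat.add_lt_add_right hst _
  have hih := ih _ hlt hUcard haU hbU rfl
  have hRT' : insert t R = T := Finset.insert_erase htT
  have hrel := minorOn_three_term_cyclic X R (a := a) (b := b) (x := s) (y := t)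
    (by rw [← hT, ← Finset.card_erase_add_one htT]) h.succ
    (fun h' => haT (hRT a h')) (fun h' => hbT (hRT b h')) hsR (by simp [hR]) hsb hta hst
  have hextra : 0 ≤ minorOn X (insert b (insert a R)) * minorOn X (insert s (insert t R)) := by
    rw [Finset.insert_comm s t]
    refine mul_nonneg (hX _ ?_) (hins hUcard htU)
    rw [Finset.card_insert_of_notMem, Finset.card_insert_of_notMem, ← hT,
      ← Finset.card_erase_add_one htT]
    · exact fun h' => haT (hRT a h')
    · simp only [Finset.mem_insert, not_or]
      exact ⟨h.ne.symm, fun h' => hbT (hRT b h')⟩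
  rw [hRT'] at hrel
  have hUpos : 0 < minorOn X (insert a (insert s R)) := lt_of_le_of_ne (hins hUcard haU) hU.symm
  refine le_of_mul_le_mul_right ?_ hUpos
  have hTnn := hins hT haT
  have hSnn := hins h.card_erase haS
  rw [hRT'] at hextra
  have h1 := mul_le_mul_of_nonneg_right hih hTnn
  have h2 := mul_nonneg hextra hSnn
  linear_combination h1 + h2 - minorOn X (insert a (I.erase b)) * hrel

end IsGreedyPair

lemma not_lex_of_mem_of_notMem {α : Type*} [LinearOrder α] {l₁ l₂ : List α}
    (h₁ : l₁.Pairwise (· < ·)) (h₂ : l₂.Pairwise (· < ·)) (hlen : l₁.length = l₂.length) {x : α}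
    (hx₂ : x ∈ l₂) (hx₁ : x ∉ l₁) (h : ∀ y < x, y ∈ l₁ ↔ y ∈ l₂) :
    ¬ List.Lex (· < ·) l₁ l₂ := by
  induction l₁ generalizing l₂ with
  | nil =>
    rw [List.length_nil, eq_comm, List.length_eq_zero_iff] at hlen
    simp [hlen] at hx₂
  | cons u l₁ ih =>
    intro hlex
    cases hlex with
    | rel huv =>
      rename_i v l₂
      rw [List.pairwise_cons] at h₂
      have hle : ∀ y ∈ v :: l₂, v ≤ y := by
        intro y hy
        rcases List.mem_cons.1 hy with rfl | hy
        · exact le_rfl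
        · exact (h₂.1 y hy).le
      have hu := (h u (huv.trans_le (hle x hx₂))).1 List.mem_cons_self
      exact absurd (hle u hu) (not_le.2 huv)
    | cons hlex =>
      rename_i l₂
      rw [List.pairwise_cons] at h₁ h₂
      rw [List.mem_cons, not_or] at hx₁
      refine ih h₁.2 h₂.2 (by simpa using hlen) ((List.mem_cons.1 hx₂).resolve_left hx₁.1) hx₁.2
        (fun y hy => ?_) hlex
      by_cases hyu : y = u
      · subst hyu
        exact iff_of_false (fun h' => lt_irrefl _ (h₁.1 _ h')) fun h' => lt_irrefl _ (h₂.1 _ h')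
      · simpa [hyu] using h y hy

/-- The lexicographically minimal basis is greedy. -/
lemma notMem_span_of_lexLE {k n : ℕ} {X : Matrix (Fin k) (Fin n) ℝ} {b : Fin n}
    {I : Finset (Fin n)} (hcard : I.card = k) (hne : minorOn X I ≠ 0)
    (hlex : ∀ K : Finset (Fin n), K.card = k → minorOn X K ≠ 0 → lexLE b I K) {s : Fin n}
    (hs : s ∈ I) : X.col s ∉ Submodule.span ℝ (X.col '' {x | cycPos b x < cycPos b s}) := by
  intro hspan
  have hind := (minorOn_ne_zero_iff X I hcard).1 hne
  obtain ⟨j, hj, hjspan⟩ : ∃ j, cycPos b j < cycPos b s ∧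
      X.col j ∉ Submodule.span ℝ (X.col '' (I.erase s : Set (Fin n))) := by
    by_contra! hall
    refine hind.notMem_span hs (Submodule.span_le.2 ?_ hspan)
    rintro _ ⟨x, hx, rfl⟩
    have := hall x hx
    rwa [Finset.coe_erase] at this
  have hjs : j ≠ s := fun h => by rw [h] at hj; exact lt_irrefl _ hj
  have hjE : j ∉ I.erase s := fun h => hjspan (Submodule.subset_span ⟨j, h, rfl⟩)
  have hjI : j ∉ I := fun h => hjE (Finset.mem_erase.2 ⟨hjs, h⟩)
  have hcardE : (I.erase s).card + 1 = k := by rw [Finset.card_erase_add_one hs, hcard]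
  have hcardK : (insert j (I.erase s)).card = k := by
    rw [Finset.card_insert_of_notMem hjE, hcardE]
  have hinj : Function.Injective fun x : Fin n => x - b := fun x y hxy =>
    cycPos_injective b (congrArg Fin.val hxy)
  rcases hlex _ hcardK ((minorOn_insert_ne_zero_iff hcardE hjE).2 ⟨hind.mono (by simp), hjspan⟩)
    with h | h
  · exact hjI (h ▸ Finset.mem_insert_self _ _)
  · refine not_lex_of_mem_of_notMem (x := j - b) (Finset.sortedLT_sort _).pairwise
      (Finset.sortedLT_sort _).pairwise ?_ ?_ ?_ ?_ h
    · rw [Finset.length_sort, Finset.length_sort, Finset.card_image_of_injective _ hinj,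
        Finset.card_image_of_injective _ hinj, hcard, hcardK]
    · rw [Finset.mem_sort]
      exact Finset.mem_image_of_mem _ (Finset.mem_insert_self _ _)
    · rw [Finset.mem_sort, hinj.mem_finset_image]
      exact hjI
    · intro y hy
      obtain ⟨z, hz⟩ := exists_cycPos_eq b y.isLt
      obtain rfl : z - b = y := Fin.ext hz
      have hzj : cycPos b z < cycPos b j := hy
      have h1 : z ≠ j := fun h => by rw [h] at hzj; exact lt_irrefl _ hzj
      have h2 : z ≠ s := fun h => by rw [h] at hzj; exact lt_asymm hzj hj
      rw [Finset.mem_sort, Finset.mem_sort, hinj.mem_finset_image, hinj.mem_finset_image]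
      simp [h1, h2]

lemma colP_of_emod {k n : ℕ} (X : Matrix (Fin k) (Fin n) ℝ) {m : ℤ} {x : Fin n}
    (h : m % (n : ℤ) = (x : ℕ)) : colP X m = X.col x := by
  ext r
  simp [colP, h]

lemma colP_add_cycPos {k n : ℕ} (X : Matrix (Fin k) (Fin n) ℝ) (b x : Fin n) :
    colP X ((b : ℕ) + (cycPos b x : ℕ)) = X.col x := by
  have hx := x.isLt
  have hb := b.isLt
  apply colP_of_emod
  rw [cycPos_eq]
  split_ifs with h
  · rw [Fin.le_def] at h
    rw [show ((b : ℕ) : ℤ) + ((x - b : ℕ) : ℤ) = (x : ℕ) by omega]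
    exact Int.emod_eq_of_lt (by omega) (by omega)
  · rw [show ((b : ℕ) : ℤ) + ((x + n - b : ℕ) : ℤ) = (x : ℕ) + n by omega, Int.add_emod_right]
    exact Int.emod_eq_of_lt (by omega) (by omega)

lemma colP_image {k n : ℕ} (X : Matrix (Fin k) (Fin n) ℝ) (b : Fin n) {M : Set ℤ}
    (hM : M ⊆ Set.Ico (b : ℤ) (b + n)) :
    colP X '' M = X.col '' {x | ((b : ℕ) + (cycPos b x : ℕ) : ℤ) ∈ M} := by
  ext v
  constructor
  · rintro ⟨m, hm, rfl⟩
    obtain ⟨h1, h2⟩ := hM hm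
    obtain ⟨x, hx⟩ := exists_cycPos_eq b (j := (m - b).toNat) (by omega)
    have hmx : ((b : ℕ) + (cycPos b x : ℕ) : ℤ) = m := by omega
    exact ⟨x, by rwa [Set.mem_ofPred_eq, hmx], by rw [← colP_add_cycPos X b, hmx]⟩
  · rintro ⟨x, hx, rfl⟩
    exact ⟨_, hx, colP_add_cycPos X b x⟩

lemma isLeast_fX {k n : ℕ} (hn : 0 < n) (X : Matrix (Fin k) (Fin n) ℝ) (i : ℤ) :
    IsLeast {j : ℤ | i ≤ j ∧ colP X i ∈ Submodule.span ℝ (colP X '' Set.Ioc i j)} (fX X i) := by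
  have hbdd : BddBelow {j : ℤ | i ≤ j ∧
      colP X i ∈ Submodule.span ℝ (colP X '' Set.Ioc i j)} := ⟨i, fun j hj => hj.1⟩
  have hper : colP X (i + n) = colP X i := by
    ext r
    simp [colP]
  have hmem : i + (n : ℤ) ∈ {j : ℤ | i ≤ j ∧
      colP X i ∈ Submodule.span ℝ (colP X '' Set.Ioc i j)} :=
    ⟨by omega, Submodule.subset_span (hper ▸ Set.mem_image_of_mem _ ⟨by omega, le_rfl⟩)⟩
  exact ⟨Int.csInf_mem ⟨_, hmem⟩ hbdd, fun j hj => csInf_le hbdd hj⟩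

lemma fX_eq_of_isLeast {k n : ℕ} {X : Matrix (Fin k) (Fin n) ℝ} {i p : ℤ}
    (h : IsLeast {j : ℤ | i ≤ j ∧ colP X i ∈ Submodule.span ℝ (colP X '' Set.Ioc i j)} p) :
    fX X i = p := h.csInf_eq

lemma isGreedyPair_of_fX {k n : ℕ} {X : Matrix (Fin k) (Fin n) ℝ} {i : ℕ} {a b : Fin n}
    (ha : (a : ℕ) = i) (hb : (b : ℕ) = i + 1) (h1 : (i : ℤ) < fX X i)
    (h2 : fX X i < fX X (i + 1)) (h3 : fX X (i + 1) < (i : ℤ) + n + 1) {I : Finset (Fin n)}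
    (hcard : I.card = k) (hne : minorOn X I ≠ 0)
    (hlex : ∀ K : Finset (Fin n), K.card = k → minorOn X K ≠ 0 → lexLE b I K) :
    IsGreedyPair X a b I (fX X i - i).toNat (fX X (i + 1) - i).toNat := by
  have hn : 0 < n := by have := a.isLt; omega
  have hin : i < n := by have := a.isLt; omega
  have hin' : i + 1 < n := by have := b.isLt; omega
  obtain ⟨⟨-, hP⟩, hPmin⟩ := isLeast_fX hn X i
  obtain ⟨⟨-, hQ⟩, hQmin⟩ := isLeast_fX hn X (i + 1)
  generalize fX X i = P at *
  generalize fX X (i + 1) = Q at *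
  have hca : colP X i = X.col a :=
    colP_of_emod X (by rw [ha]; exact Int.emod_eq_of_lt (by omega) (by omega))
  have hcb : colP X (i + 1) = X.col b :=
    colP_of_emod X (by
      rw [hb, Nat.cast_add, Nat.cast_one]; exact Int.emod_eq_of_lt (by omega) (by omega))
  rw [hca] at hP hPmin
  rw [hcb] at hQ hQmin
  have hset1 : ∀ e : ℕ, e ≤ n → colP X '' Set.Ioc i (i + e) = X.col '' {x | cycPos b x < e} := by
    intro e he
    rw [colP_image X b (fun m hm => ⟨by have := hm.1; omega, by have := hm.2; omega⟩)]
    congr 1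
    ext x
    simp only [Set.mem_ofPred_eq, Set.mem_Ioc, hb]
    omega
  have hset2 : ∀ e : ℕ, e ≤ n → colP X '' Set.Ioc (i + 1) (i + e) =
      X.col '' {x | 0 < cycPos b x ∧ cycPos b x < e} := by
    intro e he
    rw [colP_image X b (fun m hm => ⟨by have := hm.1; omega, by have := hm.2; omega⟩)]
    congr 1
    ext x
    simp only [Set.mem_ofPred_eq, Set.mem_Ioc, hb]
    omega
  have hPe : P = i + (P - i).toNat := by omega
  have hQe : Q = i + (Q - i).toNat := by omega
  refine ⟨by omega, hcard, hne, fun s hs => notMem_span_of_lexLE hcard hne hlex hs, by omega,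
    by omega, by omega, ?_, fun e he hmem => ?_, ?_, fun e he hmem => ?_⟩
  · rwa [← hset1 _ (by omega), ← hPe]
  · rw [← hset1 e (by omega)] at hmem
    have := hPmin ⟨by omega, hmem⟩
    omega
  · rwa [← hset2 _ (by omega), ← hQe]
  · have hmem' : X.col b ∈ Submodule.span ℝ
        (X.col '' {x | 0 < cycPos b x ∧ cycPos b x < e + 1}) := by
      refine Submodule.span_mono (Set.image_mono ?_) hmem
      exact fun x hx => ⟨hx.1, Nat.lt_succ_of_lt hx.2⟩
    rcases Nat.eq_zero_or_pos e with rfl | he0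
    · rw [← hset2 1 (by omega)] at hmem'
      have : Q ≤ i + (1 : ℕ) := hQmin ⟨by simp, hmem'⟩
      omega
    · rw [← hset2 e (by omega)] at hmem
      have := hQmin ⟨by omega, hmem⟩
      omega

namespace IsGreedyPair

variable {k n : ℕ} {X X' : Matrix (Fin k) (Fin n) ℝ} {a b : Fin n} {I : Finset (Fin n)} {p q : ℕ}
  {t : ℝ}

lemma col_sub_mem_span (h : IsGreedyPair X a b I p q)
    (hne : minorOn X (insert a (I.erase b)) ≠ 0)
    (ht : t = minorOn X I / minorOn X (insert a (I.erase b)))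
    (hb : X'.col b = X.col b - t • X.col a) (hX : ∀ j, j ≠ b → X'.col j = X.col j) :
    X'.col b ∈ Submodule.span ℝ (X.col '' {x | 0 < cycPos b x ∧ cycPos b x < p}) := by
  have himage : X'.col '' (I.erase b : Set (Fin n)) = X.col '' (I.erase b : Set (Fin n)) :=
    Set.image_congr fun j hj => hX j (Finset.ne_of_mem_erase hj)
  have hzero : minorOn X' (insert b (I.erase b)) = 0 := by
    rw [minorOn_insert_of_col_sub h.succ hb hX h.card_erase (Finset.notMem_erase b I),
      if_neg fun h' => h.left_notMem (Finset.mem_of_mem_erase h'), Finset.insert_erase h.right_mem,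
      ht, div_mul_cancel₀ _ hne, sub_self]
  have hspan : X'.col b ∈ Submodule.span ℝ (X.col '' (I.erase b : Set (Fin n))) := by
    by_contra hcon
    refine (minorOn_insert_ne_zero_iff h.card_erase (Finset.notMem_erase b I)).2 ⟨?_, ?_⟩ hzero
    · exact (linearIndepOn_congr fun j hj => hX j (Finset.ne_of_mem_erase hj)).2
        h.linearIndepOn_erase
    · rwa [himage]
  have hlt : X'.col b ∈ Submodule.span ℝ (X.col '' {x | cycPos b x < p}) := by
    rw [hb]
    refine Submodule.sub_mem _ (Submodule.subset_span ⟨b, ?_, rfl⟩)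
      (Submodule.smul_mem _ _ h.mem_left)
    rw [Set.mem_ofPred_eq, cycPos_self]
    exact h.pos
  refine Submodule.span_mono (Set.image_mono ?_)
    (mem_span_image_inter_lt (cycPos_injective b) h.greedy_erase hlt hspan)
  rintro x ⟨hxI, hx⟩
  exact ⟨cycPos_pos (Finset.ne_of_mem_erase hxI), hx⟩

lemma isTNN_of_col_sub (h : IsGreedyPair X a b I p q) (hTNN : IsTNN X)
    (hb : X'.col b = X.col b -
      (minorOn X I / minorOn X (insert a (I.erase b))) • X.col a)
    (hX : ∀ j, j ≠ b → X'.col j = X.col j) : IsTNN X' := by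
  have hne := h.minor_left_ne_zero hTNN.2
  have haS : a ∉ I.erase b := fun h' => h.left_notMem (Finset.mem_of_mem_erase h')
  have hcard : (insert a (I.erase b)).card = k := by
    rw [Finset.card_insert_of_notMem haS, h.card_erase]
  have hpos : 0 < minorOn X (insert a (I.erase b)) := lt_of_le_of_ne (hTNN.2 _ hcard) hne.symm
  have hmissing : ∀ J : Finset (Fin n), b ∉ J → minorOn X' J = minorOn X J := fun J hbJ =>
    minorOn_congr_of_col_eq fun j hj => hX j fun h' => hbJ (h' ▸ hj)
  refine ⟨rank_eq_of_minorOn_ne_zero hcard ?_, fun J hJ => ?_⟩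
  · rw [hmissing _ (by simp [h.ne.symm])]
    exact hne
  by_cases hbJ : b ∈ J
  · have hT : (J.erase b).card + 1 = k := by rw [Finset.card_erase_add_one hbJ, hJ]
    have hbT := Finset.notMem_erase b J
    rw [← Finset.insert_erase hbJ, minorOn_insert_of_col_sub h.succ hb hX hT hbT]
    split_ifs with haT
    · rw [mul_zero, sub_zero, Finset.insert_erase hbJ]
      exact hTNN.2 J hJ
    · rw [sub_nonneg, div_mul_eq_mul_div, div_le_iff₀ hpos]
      exact h.minor_mul_minor_le hTNN.2 hT haT hbT
  · rw [hmissing J hbJ]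
    exact hTNN.2 J hJ

end IsGreedyPair

lemma span_image_Ioc_le {E : Type*} [AddCommGroup E] [Module ℝ E] {w w' : ℤ → E} {c d : ℤ} {s : ℝ}
    {n : ℤ} (h : ∀ m, w' m = if m % n = c + 1 then w m + s • w (m - 1) else w m) {r : ℤ}
    (hr : (r + 1) % n ≠ c + 1) :
    Submodule.span ℝ (w' '' Set.Ioc r d) ≤ Submodule.span ℝ (w '' Set.Ioc r d) := by
  rw [Submodule.span_le]
  rintro _ ⟨m, ⟨hm1, hm2⟩, rfl⟩
  rw [SetLike.mem_coe, h m]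
  have hmem : w m ∈ Submodule.span ℝ (w '' Set.Ioc r d) :=
    Submodule.subset_span ⟨m, ⟨hm1, hm2⟩, rfl⟩
  split_ifs with hmn
  · have : m ≠ r + 1 := fun h' => hr (h' ▸ hmn)
    exact Submodule.add_mem _ hmem (Submodule.smul_mem _ _
      (Submodule.subset_span ⟨m - 1, ⟨by omega, by omega⟩, rfl⟩))
  · exact hmem

section FX

variable {k n : ℕ} {X X' : Matrix (Fin k) (Fin n) ℝ} {i : ℕ} {t : ℝ}

lemma colP_of_col_sub {a b : Fin n} (ha : (a : ℕ) = i) (hb : (b : ℕ) = i + 1)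
    (hXb : X'.col b = X.col b - t • X.col a) (hX : ∀ j, j ≠ b → X'.col j = X.col j) (m : ℤ) :
    colP X' m = if m % n = i + 1 then colP X m + (-t) • colP X (m - 1) else colP X m := by
  have hn : 0 < n := a.pos
  have h0 := Int.emod_nonneg m (b := (n : ℤ)) (by omega)
  have h1 := Int.emod_lt_of_pos m (b := (n : ℤ)) (by omega)
  split_ifs with h
  · have hm : m % n = (b : ℕ) := by omega
    have hm1 : (m - 1) % n = (a : ℕ) := by
      have := b.isLt
      rw [Int.sub_emod, h, Int.emod_eq_of_lt (a := 1) (by omega) (by omega),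
        add_sub_cancel_right, ha]
      exact Int.emod_eq_of_lt (by omega) (by omega)
    rw [colP_of_emod X' hm, colP_of_emod X hm, colP_of_emod X hm1, hXb, neg_smul, sub_eq_add_neg]
  · obtain ⟨x, hx⟩ : ∃ x : Fin n, m % n = (x : ℕ) := ⟨⟨(m % n).toNat, by omega⟩, by simp [h0]⟩
    rw [colP_of_emod X' hx, colP_of_emod X hx, hX]
    rintro rfl
    omega

lemma fX_eq_of_colP_sub
    (h : ∀ m, colP X' m = if m % n = i + 1 then colP X m + (-t) • colP X (m - 1) else colP X m)
    (hi : i + 1 < n) {r : ℕ} (hr : r < n) (hri : r ≠ i) (hri1 : r ≠ i + 1) :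
    fX X' r = fX X r := by
  have hr1 : ((r : ℤ) + 1) % n ≠ i + 1 := by
    rcases eq_or_ne (r + 1) n with hrn | hrn
    · rw [show ((r : ℤ) + 1) = n by omega, Int.emod_self]
      omega
    · rw [Int.emod_eq_of_lt (by omega) (by omega)]
      omega
  have h' : ∀ m, colP X m =
      if m % n = i + 1 then colP X' m + t • colP X' (m - 1) else colP X' m := by
    intro m
    rw [h m]
    split_ifs with hm
    · have hm1 : (m - 1) % n ≠ i + 1 := by
        rw [Int.sub_emod, hm, Int.emod_eq_of_lt (a := 1) (by omega) (by omega),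
          add_sub_cancel_right, Int.emod_eq_of_lt (by omega) (by omega)]
        omega
      rw [h (m - 1), if_neg hm1]
      module
    · rfl
  have hrr : colP X' r = colP X r := by
    rw [h, if_neg]
    rw [Int.emod_eq_of_lt (by omega) (by omega)]
    omega
  have hspan : ∀ j, Submodule.span ℝ (colP X' '' Set.Ioc r j) =
      Submodule.span ℝ (colP X '' Set.Ioc r j) := fun j =>
    le_antisymm (span_image_Ioc_le h hr1) (span_image_Ioc_le h' hr1)
  simp only [fX, hrr, hspan]

lemma fX_swap_of_colP_sub (ht : t ≠ 0)
    (h : ∀ m, colP X' m = if m % n = i + 1 then colP X m + (-t) • colP X (m - 1) else colP X m)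
    (hi : i + 1 < n) (h1 : (i : ℤ) < fX X i) (h2 : fX X i < fX X (i + 1))
    (h3 : fX X (i + 1) < (i : ℤ) + n + 1)
    (hmem : colP X' (i + 1) ∈ Submodule.span ℝ (colP X '' Set.Ioc (i + 1) (fX X i))) :
    fX X' i = fX X (i + 1) ∧ fX X' (i + 1) = fX X i := by
  obtain ⟨⟨-, hP⟩, hPmin⟩ := isLeast_fX (by omega) X i
  obtain ⟨⟨-, hQ⟩, hQmin⟩ := isLeast_fX (by omega) X (i + 1)
  generalize fX X i = P at *
  generalize fX X (i + 1) = Q at *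
  have hi0 : colP X' i = colP X i := by
    rw [h, if_neg]
    rw [Int.emod_eq_of_lt (by omega) (by omega)]
    omega
  have hi1 : colP X' (i + 1) = colP X (i + 1) - t • colP X i := by
    rw [h, if_pos (Int.emod_eq_of_lt (by omega) (by omega)), add_sub_cancel_right, neg_smul,
      sub_eq_add_neg]
  have heq : ∀ m : ℤ, i + 1 < m → m ≤ i + n → colP X' m = colP X m := by
    intro m hm1 hm2
    rw [h, if_neg]
    intro hm
    rcases lt_or_ge m n with hmn | hmn
    · rw [Int.emod_eq_of_lt (by omega) hmn] at hm
      omega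
    · rw [← Int.sub_emod_right, Int.emod_eq_of_lt (by omega) (by omega)] at hm
      omega
  have himage : ∀ j : ℤ, j ≤ i + n →
      colP X' '' Set.Ioc (i + 1) j = colP X '' Set.Ioc (i + 1) j := fun j hj =>
    Set.image_congr fun m hm => heq m hm.1 (hm.2.trans hj)
  have hleft : ∀ {S : Submodule ℝ (Fin k → ℝ)}, colP X (i + 1) ∈ S → colP X' (i + 1) ∈ S →
      colP X i ∈ S := fun hS hS' =>
    (Submodule.smul_mem_iff _ ht).1 ((Submodule.sub_mem_iff_right _ hS).1 (hi1 ▸ hS'))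
  have hmono : ∀ {w : ℤ → Fin k → ℝ} {c d e f : ℤ}, c ≤ d → e ≤ f →
      Submodule.span ℝ (w '' Set.Ioc d e) ≤ Submodule.span ℝ (w '' Set.Ioc c f) :=
    fun hcd hef => Submodule.span_mono (Set.image_mono (Set.Ioc_subset_Ioc hcd hef))
  refine ⟨fX_eq_of_isLeast ⟨⟨by omega, ?_⟩, ?_⟩, fX_eq_of_isLeast ⟨⟨by omega, ?_⟩, ?_⟩⟩
  · rw [hi0]
    refine hleft ?_ (Submodule.subset_span ⟨i + 1, ⟨by omega, by omega⟩, rfl⟩)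
    rw [← himage Q (by omega)] at hQ
    exact hmono (by omega) le_rfl hQ
  · rintro j ⟨hj, hjmem⟩
    by_contra! hjQ
    rw [hi0] at hjmem
    have hle : Submodule.span ℝ (colP X' '' Set.Ioc i (max j P)) ≤
        Submodule.span ℝ (colP X '' Set.Ioc (i + 1) (max j P)) := by
      rw [Submodule.span_le]
      rintro _ ⟨m, ⟨hm1, hm2⟩, rfl⟩
      rcases eq_or_ne m (i + 1) with rfl | hm
      · exact hmono le_rfl (le_max_right _ _) hmem
      · rw [heq m (by omega) (by omega)]
        exact Submodule.subset_span ⟨m, ⟨by omega, hm2⟩, rfl⟩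
    have hw := hle (hmono le_rfl (le_max_left _ _) hjmem)
    have hw' := hmono (w := colP X) le_rfl (le_max_right j P) hmem
    have hwt := Submodule.add_mem _ hw' (Submodule.smul_mem _ t hw)
    rw [hi1, sub_add_cancel] at hwt
    have : Q ≤ max j P := hQmin ⟨by omega, hwt⟩
    omega
  · rwa [himage P (by omega)]
  · rintro j ⟨hj, hjmem⟩
    by_contra! hjP
    rw [himage j (by omega)] at hjmem
    have := hPmin ⟨by omega, hleft (Submodule.subset_span ⟨i + 1, ⟨by omega, hj⟩, rfl⟩)
      (hmono (by omega) le_rfl hjmem)⟩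
    omega

end FX

theorem stmt12 (k n : ℕ) (X : Matrix (Fin k) (Fin n) ℝ) (hrank : X.rank = k)
    (i : ℕ) (hi : i + 1 < n)
    (hf1 : (i:ℤ) < fX X i) (hf2 : fX X i < fX X (i+1)) (hf3 : fX X (i+1) < (i:ℤ) + n + 1)
    (ifin ifin1 : Fin n) (hifin : (ifin:ℕ) = i) (hifin1 : (ifin1:ℕ) = i+1)
    (Ii1 : Finset (Fin n)) (hIcard : Ii1.card = k)
    (hImin : minorOn X Ii1 ≠ 0)
    (hIlex : ∀ K : Finset (Fin n), K.card = k → minorOn X K ≠ 0 → lexLE ifin1 Ii1 K) :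
    (ifin1 ∈ Ii1 ∧ ifin ∉ Ii1) ∧
    (∀ t : ℝ, minorOn X (insert ifin (Ii1.erase ifin1)) ≠ 0 →
      t = minorOn X Ii1 / minorOn X (insert ifin (Ii1.erase ifin1)) →
      fX (X * xB n (i+1) (-t)) i = fX X (i+1) ∧
      fX (X * xB n (i+1) (-t)) (i+1) = fX X i ∧
      ∀ r : ℕ, r < n → r ≠ i → r ≠ i+1 → fX (X * xB n (i+1) (-t)) r = fX X r) ∧
    (IsTNN X →
      minorOn X (insert ifin (Ii1.erase ifin1)) ≠ 0 ∧
      IsTNN (X * xB n (i+1)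
        (-(minorOn X Ii1 / minorOn X (insert ifin (Ii1.erase ifin1)))))) := by
  have h := isGreedyPair_of_fX hifin hifin1 hf1 hf2 hf3 hIcard hImin hIlex
  have hcol (t : ℝ) (j : Fin n) (hj : j ≠ ifin1) : (X * xB n (i + 1) (-t)).col j = X.col j := by
    rw [col_mul_xB X hifin hifin1, if_neg hj]
  have hcol1 (t : ℝ) : (X * xB n (i + 1) (-t)).col ifin1 = X.col ifin1 - t • X.col ifin := by
    rw [col_mul_xB X hifin hifin1, if_pos rfl]
  refine ⟨⟨h.right_mem, h.left_notMem⟩, fun t hne ht => ?_, fun hTNN =>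
    ⟨h.minor_left_ne_zero hTNN.2, h.isTNN_of_col_sub hTNN (hcol1 _) (hcol _)⟩⟩
  have hw := colP_of_col_sub hifin hifin1 (hcol1 t) (hcol t)
  have ht0 : t ≠ 0 := ht ▸ div_ne_zero hImin hne
  have hmem := h.col_sub_mem_span hne ht (hcol1 t) (hcol t)
  have hb : colP (X * xB n (i + 1) (-t)) (i + 1) = (X * xB n (i + 1) (-t)).col ifin1 :=
    colP_of_emod _ (by rw [Int.emod_eq_of_lt (by omega) (by omega)]; omega)
  have hset : X.col '' {x | 0 < cycPos ifin1 x ∧ cycPos ifin1 x < (fX X i - i).toNat} =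
      colP X '' Set.Ioc (i + 1) (fX X i) := by
    rw [colP_image X ifin1 fun m hm => ⟨by have := hm.1; omega, by have := hm.2; omega⟩]
    congr 1
    ext x
    simp only [Set.mem_ofPred_eq, Set.mem_Ioc, hifin1]
    omega
  rw [← hb, hset] at hmem
  obtain ⟨h1, h2⟩ := fX_swap_of_colP_sub ht0 hw hi hf1 hf2 hf3 hmem
  exact ⟨h1, h2, fun r hr hri hri1 => fX_eq_of_colP_sub hw hi hr hri hri1⟩

end
end

section
/- For every a ∈ [2n], the map σ ↦ I_a(σ) is a bijection from NC_n onto the set of Catalan subsets of [2n] with respect to ≤_a. In particular, I_a(σ) is a well-defined (n−1)-element subset of [2n] and is a Catalan subset with respect to ≤_a for every noncrossing partition σ of [n]. -/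
open Finset

noncomputable section
open scoped Classical

/-- A noncrossing, parity-preserving equivalence relation on `{0, …, N-1}` in which any two
inequivalent points of the same parity are separated by an equivalent pair of the other parity:
the union of a noncrossing partition and its dual. -/
structure IsMedialRel (N : ℕ) (E : ℕ → ℕ → Prop) : Prop where
  lt : ∀ x y, E x y → x < N
  refl : ∀ x, x < N → E x x
  symm : ∀ x y, E x y → E y x
  trans : ∀ x y z, E x y → E y z → E x z
  par : ∀ x y, E x y → x % 2 = y % 2
  noncrossing : ∀ a b c d, a < b → b < c → c < d → E a c → E b d → E a b
  separated : ∀ a b, a < b → b < N → a % 2 = b % 2 → ¬ E a b →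
    ∃ u v, E u v ∧ u % 2 ≠ a % 2 ∧ a < u ∧ u < b ∧ (v < a ∨ b < v)

/-- `g` climbs after `x` if `x` has a later equivalent point, and descends otherwise. -/
def IsHeightOf (N : ℕ) (E : ℕ → ℕ → Prop) (g : ℕ → ℤ) : Prop :=
  g 0 = 1 ∧ ∀ x, x + 1 < N →
    ((∃ y, E x y ∧ x < y) → g (x + 1) = g x + 1) ∧
    ((¬ ∃ y, E x y ∧ x < y) → g (x + 1) = g x - 1)

/-- `x` and `y` see each other horizontally below the graph of `g`. -/
def Visible (N : ℕ) (g : ℕ → ℤ) (x y : ℕ) : Prop :=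
  x < N ∧ y < N ∧ g x = g y ∧ ∀ z, (x ≤ z ∧ z ≤ y ∨ y ≤ z ∧ z ≤ x) → g x ≤ g z

namespace IsMedialRel

variable {N : ℕ} {E : ℕ → ℕ → Prop}

theorem eq_of_adjacent (h : IsMedialRel N E) {x y : ℕ} (hxy : E x y) (hlt : x < y)
    (hcons : ∀ z, x < z → z < y → ¬ E x z) :
    E (x + 1) (y - 1) := by
  have hp := h.par _ _ hxy
  have hy := h.lt _ _ (h.symm _ _ hxy)
  by_contra hne
  have hlt' : x + 1 < y - 1 := by
    rcases Nat.lt_trichotomy (x + 1) (y - 1) with h1 | h1 | h1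
    · exact h1
    · exact absurd (h1 ▸ h.refl _ (by omega)) hne
    · omega
  obtain ⟨u, v, huv, hpu, h1, h2, h3⟩ := h.separated _ _ hlt' (by omega) (by omega) hne
  have hxu := hcons u (by omega) (by omega)
  apply hxu
  rcases Nat.lt_trichotomy v x with hv | rfl | hv
  · have := h.noncrossing v x u y hv (by omega) (by omega) (h.symm _ _ huv) hxy
    exact h.trans _ _ _ (h.symm _ _ this) (h.symm _ _ huv)
  · exact h.symm _ _ huv
  · have hvx : v ≠ x + 1 := by
      have := h.par _ _ huv
      omega
    rcases Nat.lt_trichotomy v y with hv' | rfl | hv'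
    · have := h.par _ _ huv
      omega
    · exact h.trans _ _ _ hxy (h.symm _ _ huv)
    · exact h.noncrossing x u y v (by omega) (by omega) (by omega) hxy huv

theorem height_of_rel (h : IsMedialRel N E) {g : ℕ → ℤ} (hg : IsHeightOf N E g) (d : ℕ) :
    ∀ x y, E x y → y = x + d → g x = g y ∧ ∀ z, x ≤ z → z ≤ y → g x ≤ g z := by
  induction d using Nat.strong_induction_on with
  | _ d ih =>
    intro x y hxy hd
    rcases Nat.eq_zero_or_pos d with rfl | hpos
    · obtain rfl : y = x := by omega
      refine ⟨rfl, fun z h1 h2 => ?_⟩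
      obtain rfl : z = y := by omega
      exact le_rfl
    by_cases hmid : ∃ w, x < w ∧ w < y ∧ E x w
    · obtain ⟨w, h1, h2, hw⟩ := hmid
      obtain ⟨e1, f1⟩ := ih (w - x) (by omega) x w hw (by omega)
      obtain ⟨e2, f2⟩ := ih (y - w) (by omega) w y (h.trans _ _ _ (h.symm _ _ hw) hxy) (by omega)
      refine ⟨e1.trans e2, fun z h3 h4 => ?_⟩
      rcases le_total z w with h5 | h5
      · exact f1 z h3 h5
      · exact e1 ▸ f2 z h5 h4
    · push Not at hmid
      have hin := h.eq_of_adjacent hxy (by omega) hmid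
      have hp := h.par _ _ hxy
      have hy := h.lt _ _ (h.symm _ _ hxy)
      obtain ⟨e, f⟩ := ih (d - 2) (by omega) (x + 1) (y - 1) hin (by omega)
      have hup := (hg.2 x (by omega)).1 ⟨y, hxy, by omega⟩
      have hdown := (hg.2 (y - 1) (by omega)).2 (by
        rintro ⟨w, hw, hlt⟩
        have hp' := h.par _ _ hw
        have := h.par _ _
          (h.noncrossing x (y - 1) y w (by omega) (by omega) (by omega) hxy hw)
        omega)
      rw [show y - 1 + 1 = y by omega] at hdown
      refine ⟨by omega, fun z h3 h4 => ?_⟩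
      rcases Nat.eq_or_lt_of_le h3 with rfl | h5
      · exact le_rfl
      rcases Nat.eq_or_lt_of_le h4 with rfl | h6
      · omega
      · have := f z (by omega) (by omega)
        omega

theorem height_parity {g : ℕ → ℤ} (hg : IsHeightOf N E g) (x : ℕ) (hx : x < N) :
    g x % 2 = ((x : ℤ) + 1) % 2 := by
  induction x with
  | zero => simp [hg.1]
  | succ x ih =>
    have := ih (by omega)
    have h2 := hg.2 x hx
    by_cases hc : ∃ y, E x y ∧ x < y
    · have := h2.1 hc
      omega
    · have := h2.2 hc
      omega

theorem rel_of_height (h : IsMedialRel N E) {g : ℕ → ℤ} (hg : IsHeightOf N E g) {x y : ℕ}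
    (hxy : x ≤ y) (hy : y < N) (he : g x = g y) (hle : ∀ z, x ≤ z → z ≤ y → g x ≤ g z) :
    E x y := by
  rcases Nat.eq_or_lt_of_le hxy with rfl | hlt
  · exact h.refl _ hy
  by_contra hne
  have p1 := height_parity hg x (by omega)
  have p2 := height_parity hg y hy
  obtain ⟨u, v, huv, hpu, h1, h2, h3⟩ := h.separated x y hlt hy (by omega) hne
  have p3 := height_parity hg u (by omega)
  have hu := hle u (by omega) (by omega)
  rcases h3 with h3 | h3
  · obtain ⟨e, f⟩ := h.height_of_rel hg (u - v) v u (h.symm _ _ huv) (by omega)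
    have := f x (by omega) (by omega)
    omega
  · obtain ⟨e, f⟩ := h.height_of_rel hg (v - u) u v huv (by omega)
    have := f y (by omega) (by omega)
    omega

theorem rel_iff_visible (h : IsMedialRel N E) {g : ℕ → ℤ} (hg : IsHeightOf N E g) (x y : ℕ) :
    E x y ↔ Visible N g x y := by
  constructor
  · intro hxy
    refine ⟨h.lt _ _ hxy, h.lt _ _ (h.symm _ _ hxy), ?_⟩
    rcases le_total x y with hle | hle
    · obtain ⟨e, f⟩ := h.height_of_rel hg (y - x) x y hxy (by omega)
      exact ⟨e, fun z hz => f z (by omega) (by omega)⟩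
    · obtain ⟨e, f⟩ := h.height_of_rel hg (x - y) y x (h.symm _ _ hxy) (by omega)
      exact ⟨e.symm, fun z hz => e ▸ f z (by omega) (by omega)⟩
  · rintro ⟨hx, hy, he, hle⟩
    rcases le_total x y with h1 | h1
    · exact h.rel_of_height hg h1 hy he fun z h2 h3 => hle z (Or.inl ⟨h2, h3⟩)
    · exact h.symm _ _
        (h.rel_of_height hg h1 hx he.symm fun z h2 h3 => he ▸ hle z (Or.inr ⟨h2, h3⟩))

theorem height_nonneg (h : IsMedialRel N E) (hN : 2 ≤ N) (hN2 : N % 2 = 0) {g : ℕ → ℤ}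
    (hg : IsHeightOf N E g) : g (N - 1) = 0 ∧ ∀ x, x < N → 0 ≤ g x := by
  obtain ⟨M, hM, hmax⟩ : ∃ M, E 0 M ∧ ∀ y, E 0 y → y ≤ M := by
    have hex : ∃ M, ∀ y, E 0 y → y ≤ M := ⟨N, fun y hy => (h.lt _ _ (h.symm _ _ hy)).le⟩
    refine ⟨Nat.find hex, ?_, Nat.find_spec hex⟩
    by_contra hne
    have hpos : Nat.find hex ≠ 0 := fun h0 => hne (by
      rw [h0]
      exact h.refl 0 (by omega))
    refine Nat.find_min hex (Nat.sub_one_lt hpos) fun y hy => ?_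
    have h1 := Nat.find_spec hex y hy
    have : y ≠ Nat.find hex := fun he => hne (he ▸ hy)
    omega
  have hMN := h.lt _ _ (h.symm _ _ hM)
  have hMp := h.par _ _ hM
  obtain ⟨e1, f1⟩ := h.height_of_rel hg M 0 M hM (by omega)
  have hdown := (hg.2 M (by omega)).2 (by
    rintro ⟨w, hw, hlt⟩
    have := hmax w (h.trans _ _ _ hM hw)
    omega)
  have hlast : E (M + 1) (N - 1) := by
    by_contra hne
    rcases Nat.eq_or_lt_of_le (show M + 1 ≤ N - 1 by omega) with he | hlt
    · exact hne (he ▸ h.refl _ (by omega))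
    obtain ⟨u, v, huv, hpu, h1, h2, h3⟩ :=
      h.separated (M + 1) (N - 1) hlt (by omega) (by omega) hne
    have hv := h.lt _ _ (h.symm _ _ huv)
    have hv0 : ¬ E 0 u := fun hu => by
      have := hmax u hu
      omega
    rcases Nat.eq_or_lt_of_le (show v ≤ M by omega) with rfl | hvM
    · exact hv0 (h.trans _ _ _ hM (h.symm _ _ huv))
    rcases Nat.eq_zero_or_pos v with rfl | hvpos
    · exact hv0 (h.symm _ _ huv)
    · have := h.noncrossing 0 v M u hvpos hvM (by omega) hM (h.symm _ _ huv)
      exact hv0 (h.trans _ _ _ this (h.symm _ _ huv))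
  obtain ⟨e2, f2⟩ := h.height_of_rel hg (N - 1 - (M + 1)) (M + 1) (N - 1) hlast (by omega)
  have h0 := hg.1
  refine ⟨by omega, fun x hx => ?_⟩
  rcases Nat.lt_or_ge M x with h1 | h1
  · have := f2 x (by omega) (by omega)
    omega
  · have := f1 x (by omega) h1
    omega

end IsMedialRel

/-- The height sequence of a Dyck path, indexed from the end of its first step. -/
structure IsDyckHeight (N : ℕ) (g : ℕ → ℤ) : Prop where
  zero : g 0 = 1
  last : g (N - 1) = 0
  nonneg : ∀ x, x < N → 0 ≤ g x
  step : ∀ x, x + 1 < N → g (x + 1) = g x + 1 ∨ g (x + 1) = g x - 1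

namespace IsDyckHeight

variable {N : ℕ} {g : ℕ → ℤ}

theorem parity (h : IsDyckHeight N g) (x : ℕ) (hx : x < N) : g x % 2 = ((x : ℤ) + 1) % 2 := by
  induction x with
  | zero => simp [h.zero]
  | succ x ih =>
    have := ih (by omega)
    have := h.step x hx
    omega

theorem exists_last (h : IsDyckHeight N g) {L : ℤ} {s : ℕ} (d : ℕ) (hs : g s ≤ L)
    (hN : s + d < N) (ht : L < g (s + d)) :
    ∃ u, s ≤ u ∧ u < s + d ∧ g u = L ∧ ∀ w, u < w → w ≤ s + d → L < g w := by
  induction d with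
  | zero => exact absurd ht (by simpa using hs)
  | succ d ih =>
    have hstep := h.step (s + d) hN
    rw [← add_assoc] at ht
    by_cases hd : L < g (s + d)
    · obtain ⟨u, h1, h2, h3, h4⟩ := ih (by omega) hd
      refine ⟨u, h1, by omega, h3, fun w h5 h6 => ?_⟩
      rcases Nat.eq_or_lt_of_le h6 with rfl | h7
      · exact ht
      · exact h4 w h5 (by omega)
    · refine ⟨s + d, by omega, by omega, by omega, fun w h5 h6 => ?_⟩
      obtain rfl : w = s + d + 1 := by omega
      exact ht

theorem exists_first (h : IsDyckHeight N g) {L : ℤ} {s : ℕ} (d : ℕ) (hs : L < g s)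
    (hN : s + d < N) (ht : g (s + d) ≤ L) :
    ∃ u, s < u ∧ u ≤ s + d ∧ g u = L ∧ ∀ w, s ≤ w → w < u → L < g w := by
  have hmin : ∃ m, s ≤ m ∧ g m ≤ L := ⟨s + d, by omega, ht⟩
  have hspec := Nat.find_spec hmin
  have hlt : ∀ k, s ≤ k → k < Nat.find hmin → L < g k := fun k hk hk' => by
    have := Nat.find_min hmin hk'
    push Not at this
    exact this hk
  have hle : Nat.find hmin ≤ s + d := Nat.find_min' hmin ⟨by omega, ht⟩
  have hne : s ≠ Nat.find hmin := fun he => by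
    rw [← he] at hspec
    omega
  have hstep := h.step (Nat.find hmin - 1) (by omega)
  have := hlt (Nat.find hmin - 1) (by omega) (by omega)
  rw [show Nat.find hmin - 1 + 1 = Nat.find hmin by omega] at hstep
  exact ⟨Nat.find hmin, by omega, hle, by omega, hlt⟩

theorem isMedialRel_visible (h : IsDyckHeight N g) : IsMedialRel N (Visible N g) where
  lt x y hxy := hxy.1
  refl x hx := ⟨hx, hx, rfl, fun z hz => by
    obtain rfl : z = x := by omega
    exact le_rfl⟩
  symm x y hxy := ⟨hxy.2.1, hxy.1, hxy.2.2.1.symm, fun z hz => hxy.2.2.1 ▸ hxy.2.2.2 z hz.symm⟩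
  trans x y z hxy hyz := by
    obtain ⟨h1, h2, h3, h4⟩ := hxy
    obtain ⟨h5, h6, h7, h8⟩ := hyz
    refine ⟨h1, h6, h3.trans h7, fun w hw => ?_⟩
    by_cases hc : x ≤ w ∧ w ≤ y ∨ y ≤ w ∧ w ≤ x
    · exact h4 w hc
    · exact h3 ▸ h8 w (by omega)
  par x y hxy := by
    have h1 := h.parity x hxy.1
    have h2 := h.parity y hxy.2.1
    have := hxy.2.2.1
    omega
  noncrossing a b c d hab hbc hcd hac hbd := by
    have h1 := hac.2.2.2 b (by omega)
    have h2 := hbd.2.2.2 c (by omega)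
    have h3 := hac.2.2.1
    exact ⟨hac.1, hbd.1, by omega, fun z hz => hac.2.2.2 z (by omega)⟩
  separated a b hab hb hp hne := by
    have pa := h.parity a (by omega)
    have pb := h.parity b hb
    by_cases hc : ∃ s, a ≤ s ∧ s ≤ b ∧ g s < g b
    · obtain ⟨s, h1, h2, h3⟩ := hc
      have hs0 := h.nonneg s (by omega)
      have hsb : s + (b - s) = b := by omega
      obtain ⟨u, h4, h5, h6, h7⟩ := h.exists_last (s := s) (L := g b - 1) (b - s) (by omega)
        (by omega) (by rw [hsb]; omega)
      have hbN : b + (N - 1 - b) = N - 1 := by omega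
      have hl := h.last
      obtain ⟨v, h8, h9, h10, h11⟩ := h.exists_first (s := b) (L := g b - 1) (N - 1 - b)
        (by omega) (by omega) (by rw [hbN]; omega)
      have pu := h.parity u (by omega)
      have hua : u ≠ a := by rintro rfl; omega
      refine ⟨u, v, ⟨by omega, by omega, by omega, fun z hz => ?_⟩, by omega, by omega,
        by omega, Or.inr h8⟩
      rcases Nat.lt_or_ge z v with hzv | hzv
      · rcases Nat.lt_or_ge z b with hzb | hzb
        · rcases Nat.eq_or_lt_of_le (show u ≤ z by omega) with rfl | hzu
          · exact le_rfl
          · have := h7 z hzu (by omega)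
            omega
        · have := h11 z hzb hzv
          omega
      · obtain rfl : z = v := by omega
        omega
    · push Not at hc
      have hba := hc a le_rfl hab.le
      have hlt : g b < g a := by
        rcases hba.lt_or_eq with h1 | h1
        · exact h1
        · refine absurd ⟨by omega, hb, h1.symm, fun z hz => ?_⟩ hne
          have := hc z (by omega) (by omega)
          omega
      have hb0 := h.nonneg b hb
      have h0 := h.zero
      obtain ⟨v, h1, h2, h3, h4⟩ := h.exists_last (s := 0) (L := g a - 1) a (by omega)
        (by omega) (by rw [Nat.zero_add]; omega)
      have hab' : a + (b - a) = b := by omega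
      obtain ⟨u, h5, h6, h7, h8⟩ := h.exists_first (s := a) (L := g a - 1) (b - a)
        (by omega) (by omega) (by rw [hab']; omega)
      have pu := h.parity u (by omega)
      have hub : u ≠ b := by rintro rfl; omega
      refine ⟨u, v, ⟨by omega, by omega, by omega, fun z hz => ?_⟩, by omega, by omega,
        by omega, Or.inl (by omega)⟩
      rcases Nat.lt_or_ge z a with hza | hza
      · rcases Nat.eq_or_lt_of_le (show v ≤ z by omega) with rfl | hzv
        · omega
        · have := h4 z hzv (by omega)
          omega
      · rcases Nat.eq_or_lt_of_le (show z ≤ u by omega) with rfl | hzu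
        · exact le_rfl
        · have := h8 z hza hzu
          omega

theorem exists_visible_iff (h : IsDyckHeight N g) {x : ℕ} (hx : x + 1 < N) :
    (∃ y, Visible N g x y ∧ x < y) ↔ g (x + 1) = g x + 1 := by
  constructor
  · rintro ⟨y, hxy, hlt⟩
    have h1 := hxy.2.2.2 (x + 1) (by omega)
    have := h.step x hx
    omega
  · intro hup
    have hl := h.last
    have hx0 := h.nonneg x (by omega)
    have hN : x + 1 + (N - 1 - (x + 1)) = N - 1 := by omega
    obtain ⟨u, h1, h2, h3, h4⟩ := h.exists_first (s := x + 1) (L := g x) (N - 1 - (x + 1))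
      (by omega) (by omega) (by rw [hN]; omega)
    refine ⟨u, ⟨by omega, by omega, h3.symm, fun z hz => ?_⟩, by omega⟩
    rcases Nat.eq_or_lt_of_le (show x ≤ z by omega) with rfl | hxz
    · exact le_rfl
    · rcases Nat.eq_or_lt_of_le (show z ≤ u by omega) with rfl | hzu
      · omega
      · exact (h4 z hxz hzu).le

end IsDyckHeight

/-- Rotation by `b` of the points `0, …, N-1` on a circle. -/
def rot (N b x : ℕ) : ℕ := if x + b < N then x + b else x + b - N

theorem rot_lt {N b x : ℕ} (hb : b ≤ N) (hx : x < N) : rot N b x < N := by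
  unfold rot; split <;> omega

theorem rot_rot_sub {N b x : ℕ} (hb : b ≤ N) (hx : x < N) : rot N b (rot N (N - b) x) = x := by
  unfold rot; split_ifs <;> omega

theorem rot_sub_rot {N b x : ℕ} (hb : b ≤ N) (hx : x < N) : rot N (N - b) (rot N b x) = x := by
  unfold rot; split_ifs <;> omega

theorem rot_cases {N b x : ℕ} :
    rot N b x = x + b ∧ x + b < N ∨ rot N b x + N = x + b ∧ N ≤ x + b := by
  unfold rot; split_ifs <;> omega

theorem rot_mod_two {N b x : ℕ} (hN : N % 2 = 0) : rot N b x % 2 = (x + b) % 2 := by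
  unfold rot; split_ifs <;> omega

/-- The relation on `{0, …, N-1}` obtained from `E` by rotation by `b`. -/
def rotRel (N b : ℕ) (E : ℕ → ℕ → Prop) (x y : ℕ) : Prop :=
  x < N ∧ y < N ∧ E (rot N b x) (rot N b y)

theorem IsMedialRel.rotRel {N b : ℕ} {E : ℕ → ℕ → Prop} (h : IsMedialRel N E) (hb : b ≤ N)
    (hN : N % 2 = 0) : IsMedialRel N (rotRel N b E) where
  lt x y hxy := hxy.1
  refl x hx := ⟨hx, hx, h.refl _ (rot_lt hb hx)⟩
  symm x y hxy := ⟨hxy.2.1, hxy.1, h.symm _ _ hxy.2.2⟩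
  trans x y z hxy hyz := ⟨hxy.1, hyz.2.1, h.trans _ _ _ hxy.2.2 hyz.2.2⟩
  par x y hxy := by
    have := h.par _ _ hxy.2.2
    have hx := hxy.1
    have hy := hxy.2.1
    unfold rot at this
    split_ifs at this <;> omega
  noncrossing p q r s hpq hqr hrs hpr hqs := by
    obtain ⟨hp, hr, e1⟩ := hpr
    obtain ⟨hq, hs, e2⟩ := hqs
    refine ⟨hp, hq, ?_⟩
    have e1' := h.symm _ _ e1
    have e2' := h.symm _ _ e2
    by_cases h1 : rot N b p < rot N b q ∧ rot N b q < rot N b r ∧ rot N b r < rot N b s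
    · exact h.noncrossing _ _ _ _ h1.1 h1.2.1 h1.2.2 e1 e2
    by_cases h2 : rot N b q < rot N b r ∧ rot N b r < rot N b s ∧ rot N b s < rot N b p
    · exact h.symm _ _ (h.trans _ _ _ (h.noncrossing _ _ _ _ h2.1 h2.2.1 h2.2.2 e2 e1') e1')
    by_cases h3 : rot N b r < rot N b s ∧ rot N b s < rot N b p ∧ rot N b p < rot N b q
    · exact h.trans _ _ _ e1 (h.trans _ _ _ (h.noncrossing _ _ _ _ h3.1 h3.2.1 h3.2.2 e1' e2') e2')
    by_cases h4 : rot N b s < rot N b p ∧ rot N b p < rot N b q ∧ rot N b q < rot N b r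
    · exact h.symm _ _ (h.trans _ _ _ e2 (h.noncrossing _ _ _ _ h4.1 h4.2.1 h4.2.2 e2' e1))
    exfalso
    unfold rot at h1 h2 h3 h4
    split_ifs at h1 h2 h3 h4 <;> omega
  separated p q hpq hq hpar hne := by
    have hpN : p < N := by omega
    have hne' : ¬ E (rot N b p) (rot N b q) := fun he => hne ⟨hpN, hq, he⟩
    have key : ∃ u v, E u v ∧ u % 2 ≠ rot N b p % 2 ∧
        (rot N b p < rot N b q ∧ rot N b p < u ∧ u < rot N b q ∧ (v < rot N b p ∨ rot N b q < v) ∨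
        rot N b q < rot N b p ∧ rot N b q < u ∧ u < rot N b p ∧
          (v < rot N b q ∨ rot N b p < v)) := by
      have hpr : rot N b p % 2 = rot N b q % 2 := by
        unfold rot; split_ifs <;> omega
      rcases Nat.lt_trichotomy (rot N b p) (rot N b q) with hlt | he | hlt
      · obtain ⟨u, v, e, f, h1⟩ := h.separated _ _ hlt (rot_lt hb hq) hpr hne'
        exact ⟨u, v, e, f, Or.inl ⟨hlt, h1⟩⟩
      · exact absurd (he ▸ h.refl _ (rot_lt hb hpN)) hne'
      · obtain ⟨u, v, e, f, h1⟩ := h.separated _ _ hlt (rot_lt hb hpN) hpr.symm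
          (fun he => hne' (h.symm _ _ he))
        exact ⟨u, v, e, by omega, Or.inr ⟨hlt, h1⟩⟩
    obtain ⟨u, v, huv, hpu, hcross⟩ := key
    have hb' : N - b ≤ N := by omega
    have hup := h.par _ _ huv
    obtain ⟨u, hu, rfl⟩ : ∃ w, w < N ∧ rot N b w = u :=
      have hu := h.lt _ _ huv
      ⟨_, rot_lt hb' hu, rot_rot_sub hb hu⟩
    obtain ⟨v, hv, rfl⟩ : ∃ w, w < N ∧ rot N b w = v :=
      have hv := h.lt _ _ (h.symm _ _ huv)
      ⟨_, rot_lt hb' hv, rot_rot_sub hb hv⟩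
    simp only [rot_mod_two hN] at hpu hup
    have hsep : (p < u ∧ u < q ∧ (v < p ∨ q < v)) ∨ (p < v ∧ v < q ∧ (u < p ∨ q < u)) := by
      clear hpu hup
      rcases rot_cases (N := N) (b := b) (x := p) with h1 | h1 <;>
      rcases rot_cases (N := N) (b := b) (x := q) with h2 | h2 <;>
      rcases rot_cases (N := N) (b := b) (x := u) with h3 | h3 <;>
      rcases rot_cases (N := N) (b := b) (x := v) with h4 | h4 <;>
      omega
    rcases hsep with ⟨h1, h2, h3⟩ | ⟨h1, h2, h3⟩
    · exact ⟨u, v, ⟨hu, hv, huv⟩, by omega, h1, h2, h3⟩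
    · exact ⟨v, u, ⟨hv, hu, h.symm _ _ huv⟩, by omega, h1, h2, h3⟩

theorem rotRel_rotRel {N b : ℕ} {E : ℕ → ℕ → Prop} (hb : b ≤ N) {x y : ℕ} (hx : x < N)
    (hy : y < N) : rotRel N (N - b) (rotRel N b E) x y ↔ E x y := by
  unfold rotRel
  rw [rot_rot_sub hb hx, rot_rot_sub hb hy]
  exact ⟨fun h => h.2.2.2.2, fun h =>
    ⟨hx, hy, rot_lt (by omega) hx, rot_lt (by omega) hy, h⟩⟩

section PartitionRel

variable {n : ℕ} (σ : NCP n)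

theorem sameBlock_iff_mem_part {i j : Fin n} : sameBlock σ i j ↔ i ∈ σ.part j :=
  σ.mem_part_iff_exists.symm

theorem sameBlock_iff_part_eq {i j : Fin n} : sameBlock σ i j ↔ σ.part i = σ.part j := by
  rw [sameBlock_iff_mem_part, σ.mem_part_iff_part_eq_part (mem_univ _) (mem_univ _)]

/-- `sameBlock σ` as a relation on natural numbers. -/
def blockRel (k l : ℕ) : Prop :=
  ∃ (hk : k < n) (hl : l < n), sameBlock σ ⟨k, hk⟩ ⟨l, hl⟩

variable {σ} in
theorem blockRel.symm {k l : ℕ} (h : blockRel σ k l) : blockRel σ l k := by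
  obtain ⟨hk, hl, h⟩ := h
  refine ⟨hl, hk, ?_⟩
  rw [sameBlock_iff_part_eq] at h ⊢
  exact h.symm

variable {σ} in
theorem blockRel.trans {k l m : ℕ} (h : blockRel σ k l) (h' : blockRel σ l m) :
    blockRel σ k m := by
  obtain ⟨hk, hl, h⟩ := h
  obtain ⟨_, hm, h'⟩ := h'
  refine ⟨hk, hm, ?_⟩
  rw [sameBlock_iff_part_eq] at h h' ⊢
  exact h.trans h'

theorem blockRel_self {k : ℕ} (hk : k < n) : blockRel σ k k :=
  ⟨hk, hk, (sameBlock_iff_part_eq σ).2 rfl⟩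

theorem blockRel_val {i j : Fin n} : blockRel σ i j ↔ sameBlock σ i j :=
  ⟨fun h => h.2.2, fun h => ⟨i.2, j.2, h⟩⟩

variable {σ} in
theorem IsNoncrossing.blockRel_of_crossing (hσ : IsNoncrossing σ) {a b c d : ℕ} (hab : a < b) (hbc : b < c)
    (hcd : c < d) (hac : blockRel σ a c) (hbd : blockRel σ b d) : blockRel σ a b := by
  obtain ⟨ha, hc, hac⟩ := hac
  obtain ⟨hb, hd, hbd⟩ := hbd
  exact ⟨ha, hb, hσ ⟨a, ha⟩ ⟨b, hb⟩ ⟨c, hc⟩ ⟨d, hd⟩ hab hbc hcd hac hbd⟩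

/-- No block of `σ` meets both arcs cut out by the gaps following `i` and `j`. -/
def gapRel (i j : ℕ) : Prop :=
  ∀ k l, blockRel σ k l → ((i < k ↔ j < k) ↔ (i < l ↔ j < l))

theorem mem_cIoc {i j k : Fin n} (hij : i ≠ j) :
    k ∈ cIoc i j ↔
      if i < j then ¬ ((i : ℕ) < k ↔ (j : ℕ) < k) else ((i : ℕ) < k ↔ (j : ℕ) < k) := by
  have : (i : ℕ) ≠ j := fun h => hij (Fin.ext h)
  simp only [cIoc, mem_filter, mem_univ, true_and, Fin.lt_def, Fin.le_def]
  split_ifs <;> omega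

theorem dualRel_iff_gapRel {i j : Fin n} : dualRel σ i j ↔ gapRel σ i j := by
  unfold dualRel
  by_cases hij : i = j
  · subst hij
    simp [gapRel]
  · have hne : (i : ℕ) ≠ j := fun h => hij (Fin.ext h)
    simp only [hij, false_or]
    constructor
    · rintro h k l ⟨hk, hl, B, hB, hkB, hlB⟩
      by_contra hc
      apply h
      refine ⟨B, hB, ?_⟩
      have hk' := mem_cIoc (k := ⟨k, hk⟩) hij
      have hl' := mem_cIoc (k := ⟨l, hl⟩) hij
      have hk'' := mem_cIoc (k := ⟨k, hk⟩) (Ne.symm hij)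
      have hl'' := mem_cIoc (k := ⟨l, hl⟩) (Ne.symm hij)
      simp only [Fin.lt_def] at hk' hl' hk'' hl''
      by_cases hk1 : (⟨k, hk⟩ : Fin n) ∈ cIoc i j
      · refine ⟨⟨_, mem_inter.2 ⟨hkB, hk1⟩⟩, ⟨_, mem_inter.2 ⟨hlB, hl''.2 ?_⟩⟩⟩
        rw [hk'] at hk1
        split_ifs at hk1 ⊢ <;> omega
      · refine ⟨⟨_, mem_inter.2 ⟨hlB, hl'.2 ?_⟩⟩, ⟨_, mem_inter.2 ⟨hkB, hk''.2 ?_⟩⟩⟩ <;>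
        · rw [hk'] at hk1
          split_ifs at hk1 ⊢ <;> omega
    · rintro h ⟨B, hB, ⟨k, hk⟩, ⟨l, hl⟩⟩
      simp only [mem_inter, mem_cIoc hij, Fin.lt_def] at hk
      simp only [mem_inter, mem_cIoc (Ne.symm hij), Fin.lt_def] at hl
      have := h k l ((blockRel_val σ).2 ⟨B, hB, hk.1, hl.1⟩)
      have h1 := hk.2
      have h2 := hl.2
      split_ifs at h1 h2 <;> omega

/-- The union of the relations of `σ` (on even points) and of its dual (on odd points). -/
def medialRel (x y : ℕ) : Prop :=
  x < 2 * n ∧ y < 2 * n ∧ x % 2 = y % 2 ∧ (x % 2 = 0 → blockRel σ (x / 2) (y / 2)) ∧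
    (x % 2 = 1 → gapRel σ (x / 2) (y / 2))

theorem gapRel.symm {i j : ℕ} (h : gapRel σ i j) : gapRel σ j i := fun k l hkl => by
  have := h k l hkl
  tauto

theorem gapRel.trans {i j m : ℕ} (h : gapRel σ i j) (h' : gapRel σ j m) : gapRel σ i m :=
  fun k l hkl => by
    have h1 := h k l hkl
    have h2 := h' k l hkl
    omega

theorem gapRel.noncrossing {i j k l : ℕ} (hij : i < j) (hjk : j < k) (hkl : k < l)
    (h1 : gapRel σ i k) (h2 : gapRel σ j l) : gapRel σ i j := by
  intro p q hpq
  have := h1 p q hpq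
  have := h2 p q hpq
  omega

variable {σ} in
theorem IsNoncrossing.exists_gapRel (hσ : IsNoncrossing σ) {i j : ℕ} (hij : i < j) (hj : j < n)
    (hne : ¬ blockRel σ i j) :
    ∃ u v, gapRel σ u v ∧ v < n ∧ i ≤ u ∧ u < j ∧ (v < i ∨ j ≤ v) := by
  obtain ⟨x, hix, hxj, hx, hxmax⟩ : ∃ x, i ≤ x ∧ x < j ∧ blockRel σ i x ∧
      ∀ y, x < y → y ≤ j → ¬ blockRel σ i y := by
    have hP : blockRel σ i i := blockRel_self σ (by omega)
    have hle := Nat.findGreatest_le (P := blockRel σ i) j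
    have hspec := Nat.findGreatest_spec (P := blockRel σ i) hij.le hP
    refine ⟨Nat.findGreatest (blockRel σ i) j, Nat.le_findGreatest hij.le hP, ?_, hspec,
      fun y h1 h2 => Nat.findGreatest_is_greatest h1 h2⟩
    exact lt_of_le_of_ne hle fun he => hne (he ▸ hspec)
  by_cases hup : ∃ y, j < y ∧ blockRel σ i y
  · have hspec := Nat.find_spec hup
    have hmin : ∀ w, x < w → w < Nat.find hup → ¬ blockRel σ i w := fun w h1 h2 h3 => by
      rcases Nat.lt_or_ge j w with h4 | h4
      · exact Nat.find_min hup h2 ⟨h4, h3⟩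
      · exact hxmax w h1 h4 h3
    generalize Nat.find hup = y at hspec hmin
    obtain ⟨hjy, hy⟩ := hspec
    have hyn := hy.2.1
    have hxy := hx.symm.trans hy
    have key : ∀ p q, blockRel σ p q → x < p → p < y → x < q ∧ q < y := by
      intro p q hpq h1 h2
      have hnp := hmin p h1 h2
      have hqx : q ≠ x := by
        rintro rfl
        exact hnp (hx.trans hpq.symm)
      have hqy : q ≠ y := by
        rintro rfl
        exact hnp (hy.trans hpq.symm)
      by_contra hc
      rcases Nat.lt_or_ge q x with h3 | h3
      · have := hσ.blockRel_of_crossing h3 h1 h2 hpq.symm hxy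
        exact hnp (hx.trans (this.symm.trans hpq.symm))
      · exact hnp (hx.trans (hσ.blockRel_of_crossing h1 h2 (by omega) hxy hpq))
    refine ⟨x, y - 1, fun p q hpq => ?_, by omega, hix, hxj, by omega⟩
    have h1 := key p q hpq
    have h2 := key q p hpq.symm
    omega
  · push Not at hup
    have hex : ∃ y, blockRel σ i y := ⟨x, hx⟩
    have hy := Nat.find_spec hex
    have hmin : ∀ w, blockRel σ i w → Nat.find hex ≤ w := fun w hw => Nat.find_min' hex hw
    generalize Nat.find hex = y at hy hmin
    have hyi := hmin i (blockRel_self σ (by omega))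
    have hmax : ∀ w, blockRel σ i w → w ≤ x := fun w hw => by
      by_contra hc
      rcases Nat.lt_or_ge j w with h4 | h4
      · exact hup w h4 hw
      · exact hxmax w (by omega) h4 hw
    have key : ∀ p q, blockRel σ p q → y ≤ p → p ≤ x → y ≤ q ∧ q ≤ x := by
      intro p q hpq h1 h2
      by_cases hp : blockRel σ i p
      · exact ⟨hmin q (hp.trans hpq), hmax q (hp.trans hpq)⟩
      have hpy : p ≠ y := by
        rintro rfl
        exact hp hy
      have hpx : p ≠ x := by
        rintro rfl
        exact hp hx
      have hyx := hy.symm.trans hx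
      by_contra hc
      rcases Nat.lt_or_ge q y with h3 | h3
      · have := hσ.blockRel_of_crossing h3 (by omega) (by omega) hpq.symm hyx
        exact hp (hy.trans (this.symm.trans hpq.symm))
      · exact hp (hy.trans (hσ.blockRel_of_crossing (show y < p by omega) (show p < x by omega)
          (by omega) hyx hpq))
    rcases Nat.eq_zero_or_pos y with rfl | hpos
    · refine ⟨x, n - 1, fun p q hpq => ?_, by omega, hix, hxj, by omega⟩
      have h1 := key p q hpq
      have h2 := key q p hpq.symm
      have := hpq.1
      have := hpq.2.1
      omega
    · refine ⟨x, y - 1, fun p q hpq => ?_, by omega, hix, hxj, by omega⟩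
      have h1 := key p q hpq
      have h2 := key q p hpq.symm
      omega

variable {σ} in
theorem IsNoncrossing.isMedialRel (hσ : IsNoncrossing σ) :
    IsMedialRel (2 * n) (medialRel σ) where
  lt x y hxy := hxy.1
  refl x hx := ⟨hx, hx, rfl, fun _ => blockRel_self σ (by omega), fun _ k l _ => by simp⟩
  symm x y hxy := ⟨hxy.2.1, hxy.1, hxy.2.2.1.symm,
    fun h => (hxy.2.2.2.1 (by rw [hxy.2.2.1, h])).symm,
    fun h => (hxy.2.2.2.2 (by rw [hxy.2.2.1, h])).symm⟩
  trans x y z hxy hyz := ⟨hxy.1, hyz.2.1, hxy.2.2.1.trans hyz.2.2.1,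
    fun h => (hxy.2.2.2.1 h).trans (hyz.2.2.2.1 (by rw [← hxy.2.2.1, h])),
    fun h => (hxy.2.2.2.2 h).trans _ (hyz.2.2.2.2 (by rw [← hxy.2.2.1, h]))⟩
  par x y hxy := hxy.2.2.1
  noncrossing a b c d hab hbc hcd hac hbd := by
    obtain ⟨ha, hc, p1, e1, f1⟩ := hac
    obtain ⟨hb, hd, p2, e2, f2⟩ := hbd
    rcases Nat.mod_two_eq_zero_or_one a with pa | pa <;>
    rcases Nat.mod_two_eq_zero_or_one b with pb | pb
    · exact ⟨ha, hb, by omega, fun _ => hσ.blockRel_of_crossing (by omega) (by omega) (by omega)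
        (e1 pa) (e2 pb), by omega⟩
    · have := f2 pb _ _ (e1 pa)
      omega
    · have := f1 pa _ _ (e2 pb)
      omega
    · exact ⟨ha, hb, by omega, by omega, fun _ => gapRel.noncrossing σ (by omega) (by omega)
        (by omega) (f1 pa) (f2 pb)⟩
  separated a b hab hb hp hne := by
    rcases Nat.mod_two_eq_zero_or_one a with pa | pa
    · obtain ⟨u, v, huv, hv, h1, h2, h3⟩ := hσ.exists_gapRel (i := a / 2) (j := b / 2)
        (by omega) (by omega)
        (fun h => hne ⟨by omega, hb, hp, fun _ => h, by omega⟩)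
      refine ⟨2 * u + 1, 2 * v + 1, ⟨by omega, by omega, by omega, by omega, fun _ => ?_⟩,
        by omega, by omega, by omega, by omega⟩
      rwa [show (2 * u + 1) / 2 = u by omega, show (2 * v + 1) / 2 = v by omega]
    · have hgap : ¬ gapRel σ (a / 2) (b / 2) :=
        fun h => hne ⟨by omega, hb, hp, by omega, fun _ => h⟩
      simp only [gapRel] at hgap
      push Not at hgap
      obtain ⟨k, l, hkl, hc⟩ := hgap
      have hrel : ∀ k l, blockRel σ k l → medialRel σ (2 * k) (2 * l) := fun k l hkl => by
        have := hkl.1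
        have := hkl.2.1
        refine ⟨by omega, by omega, by omega, fun _ => ?_, by omega⟩
        rwa [show 2 * k / 2 = k by omega, show 2 * l / 2 = l by omega]
      by_cases hk : a < 2 * k ∧ 2 * k < b
      · exact ⟨2 * k, 2 * l, hrel _ _ hkl, by omega, by omega, by omega, by omega⟩
      · exact ⟨2 * l, 2 * k, hrel _ _ hkl.symm, by omega, by omega, by omega, by omega⟩

/-- A medial relation is determined by its restriction to the even points. -/
theorem IsMedialRel.iff_of_even {N : ℕ} {E F : ℕ → ℕ → Prop} (hE : IsMedialRel N E)
    (hF : IsMedialRel N F) (heven : ∀ x y, x % 2 = 0 → (E x y ↔ F x y)) (x y : ℕ) :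
    E x y ↔ F x y := by
  have aux : ∀ {E F : ℕ → ℕ → Prop}, IsMedialRel N E → IsMedialRel N F →
      (∀ x y, x % 2 = 0 → (E x y ↔ F x y)) → ∀ x y, x < y → E x y → F x y := by
    intro E F hE hF heven x y hlt hxy
    rcases Nat.mod_two_eq_zero_or_one x with hx | hx
    · exact (heven x y hx).1 hxy
    · by_contra hne
      have hy := hE.lt _ _ (hE.symm _ _ hxy)
      obtain ⟨u, v, huv, hp, h1, h2, h3⟩ := hF.separated x y hlt hy (hE.par _ _ hxy) hne
      have huv' := (heven u v (by omega)).2 huv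
      have hpv := hE.par _ _ huv'
      have hpy := hE.par _ _ hxy
      rcases h3 with h3 | h3
      · have := hE.par _ _ (hE.noncrossing v x u y h3 h1 h2 (hE.symm _ _ huv') hxy)
        omega
      · have := hE.par _ _ (hE.noncrossing x u y v h1 h2 h3 hxy huv')
        omega
  have heven' : ∀ x y, x % 2 = 0 → (F x y ↔ E x y) := fun x y hx => (heven x y hx).symm
  rcases Nat.lt_trichotomy x y with h | rfl | h
  · exact ⟨aux hE hF heven x y h, aux hF hE heven' x y h⟩
  · exact ⟨fun h => hF.refl _ (hE.lt _ _ h), fun h => hE.refl _ (hF.lt _ _ h)⟩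
  · exact ⟨fun h' => hF.symm _ _ (aux hE hF heven y x h (hE.symm _ _ h')),
      fun h' => hE.symm _ _ (aux hF hE heven' y x h (hF.symm _ _ h'))⟩

theorem medialRel_bar {i j : Fin n} : medialRel σ (bar i) (bar j) ↔ sameBlock σ i j := by
  have hi := i.2
  have hj := j.2
  simp only [medialRel, bar, ← blockRel_val]
  rw [show 2 * (i : ℕ) / 2 = i by omega, show 2 * (j : ℕ) / 2 = j by omega]
  exact ⟨fun h => h.2.2.2.1 (by omega), fun h => ⟨by omega, by omega, by omega, fun _ => h,
    by omega⟩⟩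

theorem medialRel_til {i j : Fin n} : medialRel σ (til i) (til j) ↔ dualRel σ i j := by
  have hi := i.2
  have hj := j.2
  simp only [medialRel, til, dualRel_iff_gapRel]
  rw [show (2 * (i : ℕ) + 1) / 2 = i by omega, show (2 * (j : ℕ) + 1) / 2 = j by omega]
  exact ⟨fun h => h.2.2.2.2 (by omega), fun h => ⟨by omega, by omega, by omega, by omega,
    fun _ => h⟩⟩

theorem eq_bar_or_eq_til (x : Fin (2 * n)) : (∃ i : Fin n, x = bar i) ∨ ∃ i : Fin n, x = til i := by
  have hx := x.2
  rcases Nat.mod_two_eq_zero_or_one (x : ℕ) with h | h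
  · exact Or.inl ⟨⟨x / 2, by omega⟩, Fin.ext (by simp only [bar]; omega)⟩
  · exact Or.inr ⟨⟨x / 2, by omega⟩, Fin.ext (by simp only [til]; omega)⟩

variable {σ} in
theorem mem_IaP_iff (hσ : IsNoncrossing σ) (a x : Fin (2 * n)) :
    x ∈ IaP σ a ↔ ∃ y : Fin (2 * n), medialRel σ x y ∧ x - a < y - a := by
  have hM := hσ.isMedialRel
  have hbt : ∀ i j : Fin n, bar i ≠ til j := fun i j h => by
    have := congrArg Fin.val h
    simp only [bar, til] at this
    omega
  have hbar : Function.Injective (bar (n := n)) := fun i j h => by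
    have := congrArg Fin.val h
    simp only [bar] at this
    exact Fin.ext (by omega)
  have htil : Function.Injective (til (n := n)) := fun i j h => by
    have := congrArg Fin.val h
    simp only [til] at this
    exact Fin.ext (by omega)
  rw [← not_iff_not]
  push Not
  simp only [IaP, maxAt, mem_sdiff, mem_univ, true_and, not_not, mem_union, mem_biUnion,
    mem_filter, mem_image, forall_exists_index, and_imp, forall_apply_eq_imp_iff₂]
  have hmod : ∀ x y : Fin (2 * n), medialRel σ x y → (x : ℕ) % 2 = (y : ℕ) % 2 :=
    fun x y h => hM.par _ _ h
  rcases eq_bar_or_eq_til x with ⟨i, rfl⟩ | ⟨i, rfl⟩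
  · constructor
    · rintro (⟨B, hB, ⟨i', hi', he⟩, hmax⟩ | ⟨j, ⟨i', hi', he⟩, hmax⟩)
      · obtain rfl := hbar he
        intro y hy
        rcases eq_bar_or_eq_til y with ⟨j, rfl⟩ | ⟨j, rfl⟩
        · rw [medialRel_bar, sameBlock_iff_part_eq, σ.part_eq_of_mem hB hi'] at hy
          exact hmax j (hy ▸ σ.mem_part (mem_univ j))
        · have := hmod _ _ hy
          simp only [bar, til] at this
          omega
      · exact absurd he.symm (hbt _ _)
    · intro h
      refine Or.inl ⟨σ.part i, σ.part_mem.2 (mem_univ i), ⟨i, σ.mem_part (mem_univ i), rfl⟩,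
        fun j hj => h _ ?_⟩
      rw [medialRel_bar, sameBlock_iff_part_eq]
      exact (σ.part_eq_of_mem (σ.part_mem.2 (mem_univ i)) hj).symm
  · constructor
    · rintro (⟨B, hB, ⟨i', hi', he⟩, hmax⟩ | ⟨j, ⟨i', hi', he⟩, hmax⟩)
      · exact absurd he (hbt _ _)
      · obtain rfl := htil he
        intro y hy
        rcases eq_bar_or_eq_til y with ⟨k, rfl⟩ | ⟨k, rfl⟩
        · have := hmod _ _ hy
          simp only [bar, til] at this
          omega
        · rw [← medialRel_til] at hi'
          exact hmax k ((medialRel_til σ).1 (hM.trans _ _ _ hi' hy))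
    · intro h
      exact Or.inr ⟨i, ⟨i, Or.inl rfl, rfl⟩, fun j hj => h _ ((medialRel_til σ).2 hj)⟩

end PartitionRel

section Height

variable {n : ℕ}

/-- The positions of the letters `U` in the word attached to `S`. -/
def upSteps (S : Finset (Fin (2 * n))) : Finset ℕ := insert 0 (S.image fun x : Fin (2 * n) => x.val + 1)

theorem isCatalan_iff {S : Finset (Fin (2 * n))} :
    IsCatalan S ↔ #S = n - 1 ∧ ∀ p ≤ 2 * n, p ≤ 2 * #{u ∈ upSteps S | u < p} := by
  have : upSteps S = insert 0 (S.image fun x => (x : ℕ) + 1) := by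
    ext u
    simp [upSteps]
  rw [this]
  rfl

/-- The height, after `x + 1` steps, of the path attached to `S`. -/
def height (S : Finset (Fin (2 * n))) (x : ℕ) : ℤ :=
  2 * (#{u ∈ upSteps S | u < x + 1} : ℤ) - (x + 1)

theorem succ_mem_upSteps {S : Finset (Fin (2 * n))} {x : ℕ} :
    x + 1 ∈ upSteps S ↔ ∃ y ∈ S, (y : ℕ) = x := by
  simp [upSteps]

theorem card_upSteps (S : Finset (Fin (2 * n))) : #(upSteps S) = #S + 1 := by
  rw [upSteps, card_insert_of_notMem (by simp), card_image_of_injective]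
  intro x y h
  exact Fin.ext (Nat.succ_injective h)

theorem height_zero (S : Finset (Fin (2 * n))) : height S 0 = 1 := by
  have : {u ∈ upSteps S | u < 0 + 1} = {0} := by
    ext u
    simp only [mem_filter, mem_singleton]
    constructor
    · intro h
      omega
    · rintro rfl
      exact ⟨mem_insert_self _ _, by omega⟩
  rw [height, this]
  simp

theorem height_succ (S : Finset (Fin (2 * n))) (x : ℕ) :
    height S (x + 1) = height S x + if ∃ y ∈ S, (y : ℕ) = x then 1 else -1 := by
  have hsplit : {u ∈ upSteps S | u < x + 1 + 1} =
      if x + 1 ∈ upSteps S then insert (x + 1) {u ∈ upSteps S | u < x + 1}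
      else {u ∈ upSteps S | u < x + 1} := by
    split_ifs with h <;> ext u <;> simp only [mem_insert, mem_filter]
    · constructor
      · rintro ⟨h1, h2⟩
        by_cases hu : u = x + 1
        · exact Or.inl hu
        · exact Or.inr ⟨h1, by omega⟩
      · rintro (rfl | ⟨h1, h2⟩)
        · exact ⟨h, by omega⟩
        · exact ⟨h1, by omega⟩
    · constructor
      · rintro ⟨h1, h2⟩
        have : u ≠ x + 1 := fun he => h (he ▸ h1)
        exact ⟨h1, by omega⟩
      · rintro ⟨h1, h2⟩
        exact ⟨h1, by omega⟩
  simp only [← succ_mem_upSteps, height, hsplit]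
  split_ifs with h
  · rw [card_insert_of_notMem (by simp)]
    push_cast
    ring
  · push_cast
    ring

theorem height_succ_eq_add_one_iff (S : Finset (Fin (2 * n))) (x : ℕ) :
    height S (x + 1) = height S x + 1 ↔ ∃ y ∈ S, (y : ℕ) = x := by
  rw [height_succ]
  split_ifs with h <;> simp only [h, iff_false]
  omega

theorem IsCatalan.card_filter_upSteps {S : Finset (Fin (2 * n))} (hS : IsCatalan S) (hn : 0 < n) :
    #{u ∈ upSteps S | u < 2 * n} = n ∧ #(upSteps S) = n := by
  have h1 := (isCatalan_iff.1 hS).2 (2 * n) le_rfl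
  have h2 := card_filter_le (upSteps S) (· < 2 * n)
  have h3 := card_upSteps S
  have h4 := hS.1
  omega

theorem IsCatalan.val_add_one_lt {S : Finset (Fin (2 * n))} (hS : IsCatalan S) {x : Fin (2 * n)}
    (hx : x ∈ S) : (x : ℕ) + 1 < 2 * n := by
  obtain ⟨h1, h2⟩ := hS.card_filter_upSteps (by have := x.2; omega)
  have hall := filter_card_eq (h1.trans h2.symm)
  exact hall _ (succ_mem_upSteps.2 ⟨x, hx, rfl⟩)

theorem IsCatalan.isDyckHeight {S : Finset (Fin (2 * n))} (hS : IsCatalan S) (hn : 0 < n) :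
    IsDyckHeight (2 * n) (height S) where
  zero := height_zero S
  last := by
    have h1 := (hS.card_filter_upSteps hn).1
    rw [height, show 2 * n - 1 + 1 = 2 * n by omega, h1]
    omega
  nonneg x hx := by
    have := (isCatalan_iff.1 hS).2 (x + 1) (by omega)
    rw [height]
    omega
  step x hx := by
    rw [height_succ]
    split_ifs
    · exact Or.inl rfl
    · exact Or.inr rfl

theorem isCatalan_of_height {S : Finset (Fin (2 * n))} (hn : 0 < n)
    (hlast : height S (2 * n - 1) = 0) (hnonneg : ∀ x, x < 2 * n → 0 ≤ height S x)
    (hlt : ∀ x ∈ S, (x : ℕ) + 1 < 2 * n) : IsCatalan S := by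
  refine isCatalan_iff.2 ⟨?_, fun p hp => ?_⟩
  · have hfilter : {u ∈ upSteps S | u < 2 * n} = upSteps S := by
      refine filter_true_of_mem fun u hu => ?_
      rcases Nat.eq_zero_or_eq_succ_pred u with h0 | h0
      · omega
      · rw [h0] at hu ⊢
        obtain ⟨y, hy, he⟩ := succ_mem_upSteps.1 hu
        have := hlt y hy
        omega
    rw [height, show 2 * n - 1 + 1 = 2 * n by omega, hfilter, card_upSteps] at hlast
    push_cast at hlast
    omega
  · rcases Nat.eq_zero_or_eq_succ_pred p with h0 | h0
    · omega
    · have := hnonneg p.pred (by omega)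
      rw [height] at this
      rw [h0, Nat.succ_eq_add_one]
      omega

end Height

section Main

variable {n : ℕ}

theorem val_sub_eq_rot {N : ℕ} (x a : Fin N) : ((x - a : Fin N) : ℕ) = rot N (N - a) x := by
  have hx := x.2
  have ha := a.2
  rw [Fin.val_sub, rot]
  split_ifs
  · rw [Nat.mod_eq_of_lt (by omega)]
    omega
  · rw [Nat.mod_eq_sub_mod (by omega), Nat.mod_eq_of_lt (by omega)]
    omega

theorem mem_image_sub_iff {N : ℕ} {a : Fin N} {I : Finset (Fin N)} {p : ℕ} :
    (∃ y ∈ I.image (· - a), (y : ℕ) = p) ↔ ∃ x ∈ I, rot N (N - a) x = p := by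
  simp [val_sub_eq_rot]

theorem sub_right_injective_fin {N : ℕ} (a : Fin N) : Function.Injective fun x : Fin N => x - a := by
  intro x y h
  have h' : ((x - a : Fin N) : ℕ) = (y - a : Fin N) := congrArg Fin.val h
  rw [val_sub_eq_rot, val_sub_eq_rot] at h'
  have := congrArg (rot N a) h'
  rw [rot_rot_sub a.2.le x.2, rot_rot_sub a.2.le y.2] at this
  exact Fin.ext this

theorem exists_mem_image_IaP_iff {σ : NCP n} (hσ : IsNoncrossing σ) (a : Fin (2 * n)) (p : ℕ) :
    (∃ y ∈ (IaP σ a).image (· - a), (y : ℕ) = p) ↔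
      ∃ q, rotRel (2 * n) a (medialRel σ) p q ∧ p < q := by
  have ha := a.2
  rw [mem_image_sub_iff]
  constructor
  · rintro ⟨x, hx, rfl⟩
    obtain ⟨y, hxy, hlt⟩ := (mem_IaP_iff hσ a x).1 hx
    rw [Fin.lt_def, val_sub_eq_rot, val_sub_eq_rot] at hlt
    refine ⟨_, ⟨rot_lt (by omega) x.2, rot_lt (by omega) y.2, ?_⟩, hlt⟩
    rwa [rot_rot_sub ha.le x.2, rot_rot_sub ha.le y.2]
  · rintro ⟨q, ⟨hp, hq, hpq⟩, hlt⟩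
    refine ⟨⟨rot (2 * n) a p, rot_lt ha.le hp⟩, (mem_IaP_iff hσ a _).2
      ⟨⟨rot (2 * n) a q, rot_lt ha.le hq⟩, hpq, ?_⟩, rot_sub_rot ha.le hp⟩
    rw [Fin.lt_def, val_sub_eq_rot, val_sub_eq_rot]
    simpa only [rot_sub_rot ha.le hp, rot_sub_rot ha.le hq] using hlt

theorem isHeightOf_height_IaP {σ : NCP n} (hσ : IsNoncrossing σ) (a : Fin (2 * n)) :
    IsHeightOf (2 * n) (rotRel (2 * n) a (medialRel σ)) (height ((IaP σ a).image (· - a))) := by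
  refine ⟨height_zero _, fun x _ => ?_⟩
  rw [height_succ]
  simp only [exists_mem_image_IaP_iff hσ]
  exact ⟨fun h => by rw [if_pos h], fun h => by rw [if_neg h]; rfl⟩

theorem IsNoncrossing.isMedialRel_rotRel {σ : NCP n} (hσ : IsNoncrossing σ) (a : Fin (2 * n)) :
    IsMedialRel (2 * n) (rotRel (2 * n) a (medialRel σ)) :=
  hσ.isMedialRel.rotRel a.2.le (by omega)

theorem isCatalanAt_IaP {σ : NCP n} (hσ : IsNoncrossing σ) (a : Fin (2 * n)) :
    IsCatalanAt a (IaP σ a) := by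
  have ha := a.2
  have hM := hσ.isMedialRel_rotRel a
  obtain ⟨h1, h2⟩ := hM.height_nonneg (by omega) (by omega) (isHeightOf_height_IaP hσ a)
  refine isCatalan_of_height (by omega) h1 h2 fun x hx => ?_
  obtain ⟨q, hq, hlt⟩ := (exists_mem_image_IaP_iff hσ a x).1 ⟨x, hx, rfl⟩
  have := hq.2.1
  omega

theorem eq_of_sameBlock_iff {σ τ : NCP n} (h : ∀ i j, sameBlock σ i j ↔ sameBlock τ i j) :
    σ = τ := by
  have hpart : σ.part = τ.part := by
    ext j i
    rw [← sameBlock_iff_mem_part, ← sameBlock_iff_mem_part, h]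
  have hle : ∀ {σ τ : NCP n}, σ.part = τ.part → ∀ B ∈ σ.parts, B ∈ τ.parts := by
    intro σ τ hpart B hB
    obtain ⟨x, hx⟩ := σ.nonempty_of_mem_parts hB
    rw [← σ.part_eq_of_mem hB hx, hpart]
    exact τ.part_mem.2 (mem_univ x)
  exact Finpartition.ext (Finset.ext fun B => ⟨hle hpart B, hle hpart.symm B⟩)

theorem injOn_IaP (a : Fin (2 * n)) :
    Set.InjOn (fun σ : NCP n => IaP σ a) {σ | IsNoncrossing σ} := by
  intro σ hσ τ hτ heq
  have ha := a.2
  have hg := isHeightOf_height_IaP hσ a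
  have hg' := isHeightOf_height_IaP hτ a
  simp only at heq
  rw [← heq] at hg'
  have hrel : ∀ x y, rotRel (2 * n) a (medialRel σ) x y ↔ rotRel (2 * n) a (medialRel τ) x y :=
    fun x y => ((hσ.isMedialRel_rotRel a).rel_iff_visible hg x y).trans
      ((hτ.isMedialRel_rotRel a).rel_iff_visible hg' x y).symm
  refine eq_of_sameBlock_iff fun i j => ?_
  rw [← medialRel_bar, ← medialRel_bar, ← rotRel_rotRel (E := medialRel σ) ha.le (bar i).2 (bar j).2,
    ← rotRel_rotRel (E := medialRel τ) ha.le (bar i).2 (bar j).2]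
  simp only [rotRel] at hrel ⊢
  simp only [hrel]

/-- The setoid on `[n]` given by a medial relation restricted to the even points. -/
def IsMedialRel.setoid {E : ℕ → ℕ → Prop} (hE : IsMedialRel (2 * n) E) : Setoid (Fin n) where
  r i j := E (bar i) (bar j)
  iseqv := ⟨fun i => hE.refl _ (bar i).2, hE.symm _ _, hE.trans _ _ _⟩

theorem IsMedialRel.exists_noncrossing {E : ℕ → ℕ → Prop} (hE : IsMedialRel (2 * n) E) :
    ∃ σ : NCP n, IsNoncrossing σ ∧ ∀ x y, medialRel σ x y ↔ E x y := by
  have hblock : ∀ i j, sameBlock (Finpartition.ofSetoid hE.setoid) i j ↔ E (bar i) (bar j) := by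
    intro i j
    rw [sameBlock_iff_mem_part, Finpartition.mem_part_ofSetoid_iff_rel]
    exact ⟨hE.symm _ _, hE.symm _ _⟩
  have hnc : IsNoncrossing (Finpartition.ofSetoid hE.setoid) := by
    intro a b c d hab hbc hcd
    simp only [hblock]
    refine hE.noncrossing _ _ _ _ ?_ ?_ ?_ <;> simp only [bar] <;> omega
  refine ⟨_, hnc, hnc.isMedialRel.iff_of_even hE fun x y hx => ?_⟩
  have key : ∀ {x y : ℕ}, x % 2 = 0 → x < 2 * n → y < 2 * n → x % 2 = y % 2 →
      (medialRel (Finpartition.ofSetoid hE.setoid) x y ↔ E x y) := by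
    intro x y hx hxn hyn hxy
    have := (medialRel_bar _).trans (hblock ⟨x / 2, by omega⟩ ⟨y / 2, by omega⟩)
    simp only [bar] at this
    rwa [show 2 * (x / 2) = x by omega, show 2 * (y / 2) = y by omega] at this
  exact ⟨fun h => (key hx h.1 h.2.1 h.2.2.1).1 h, fun h =>
    (key hx (hE.lt _ _ h) (hE.lt _ _ (hE.symm _ _ h)) (hE.par _ _ h)).2 h⟩

theorem surjOn_IaP (a : Fin (2 * n)) :
    Set.SurjOn (fun σ : NCP n => IaP σ a) {σ | IsNoncrossing σ} {I | IsCatalanAt a I} := by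
  intro I hI
  have ha := a.2
  have hI : IsCatalan (I.image (· - a)) := hI
  have hD := hI.isDyckHeight (by omega)
  have hV := hD.isMedialRel_visible
  have hb : 2 * n - (a : ℕ) ≤ 2 * n := by omega
  obtain ⟨σ, hσ, hrel⟩ := (hV.rotRel hb (by omega)).exists_noncrossing
  refine ⟨σ, hσ, ?_⟩
  have hrot : ∀ p q, rotRel (2 * n) a (medialRel σ) p q ↔
      Visible (2 * n) (height (I.image (· - a))) p q := by
    intro p q
    constructor
    · rintro ⟨hp, hq, h⟩
      have := ((hrel _ _).1 h).2.2
      rwa [rot_sub_rot ha.le hp, rot_sub_rot ha.le hq] at this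
    · intro h
      refine ⟨h.1, h.2.1, (hrel _ _).2 ⟨rot_lt ha.le h.1, rot_lt ha.le h.2.1, ?_⟩⟩
      rwa [rot_sub_rot ha.le h.1, rot_sub_rot ha.le h.2.1]
  apply image_injective (sub_right_injective_fin a)
  ext y
  have h1 := exists_mem_image_IaP_iff hσ a y
  simp only [hrot, Fin.val_inj, exists_eq_right] at h1
  rw [h1]
  by_cases hy : (y : ℕ) + 1 < 2 * n
  · rw [hD.exists_visible_iff hy, height_succ_eq_add_one_iff]
    simp only [Fin.val_inj, exists_eq_right]
  · refine ⟨fun ⟨q, hq, hlt⟩ => ?_, fun h => absurd (hI.val_add_one_lt h) hy⟩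
    have := hq.2.1
    omega

end Main

theorem stmt13 (n : ℕ) (a : Fin (2*n)) :
    Set.BijOn (fun σ : NCP n => IaP σ a) {σ | IsNoncrossing σ} {I | IsCatalanAt a I} ∧
    ∀ σ : NCP n, IsNoncrossing σ → (IaP σ a).card = n - 1 ∧ IsCatalanAt a (IaP σ a) := by
  refine ⟨⟨fun σ hσ => isCatalanAt_IaP hσ a, injOn_IaP a, surjOn_IaP a⟩, fun σ hσ => ?_⟩
  have hcat := isCatalanAt_IaP hσ a
  refine ⟨?_, hcat⟩
  rw [← hcat.1, card_image_of_injective _ (sub_right_injective_fin a)]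

end
end
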